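/- Let κ > 0. (a) If ψ ≤ ψ↓(κ), then almost surely liminf_{n→∞} ξ⁽²⁾_{n,ψ,κ} > 0. (b) If ψ > ψ↓(κ), then almost surely lim_{n→∞} ξ⁽²⁾_{n,ψ,κ} = T(ψ,κ); moreover the minimizer θ̂⁽²⁾_{n,ψ,κ} of the optimization defining ξ⁽²⁾_{n,ψ,κ} is (eventually) uniquely defined and satisfies, almost surely, ⟨θ̂⁽²⁾_{n,ψ,κ}, Λ_n^{1/2}w⟩ → c₁(ψ,κ) and ‖Λ_n^{1/2}θ̂⁽²⁾_{n,ψ,κ}‖₂ → (c₁(ψ,κ)² + c₂(ψ,κ)²)^{1/2}. -/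

import Mathlib

open MeasureTheory ProbabilityTheory Real Filter Set Topology

noncomputable section

namespace MaxMargin

/-- The standard Gaussian measure on `ℝ`. -/
def stdG : Measure ℝ := gaussianReal 0 1

/-- The function `F_κ(c₁,c₂) = (E[((κ − c₁·Y·G − c₂·Z)₊)²])^{1/2}` where `G, Z` are independent
standard Gaussians and, conditionally on `G`, `Y ∈ {+1,−1}` with `P(Y = +1 | G) = f(G)`. -/
def Fk (f : ℝ → ℝ) (κ c₁ c₂ : ℝ) : ℝ :=
  Real.sqrt (∫ g, ∫ z,
    (f g * (max (κ - c₁ * g - c₂ * z) 0) ^ 2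
      + (1 - f g) * (max (κ + c₁ * g - c₂ * z) 0) ^ 2) ∂stdG ∂stdG)

/-- Non-degeneracy of `f`: the variable `T = Y·G` satisfies `P(T < x) > 0` and `P(T > x) > 0`
for every `x ∈ ℝ`. -/
def NonDeg (f : ℝ → ℝ) : Prop :=
  ∀ x : ℝ,
    (0 < ∫ g, (f g * (if g < x then (1:ℝ) else 0)
          + (1 - f g) * (if -g < x then (1:ℝ) else 0)) ∂stdG) ∧
    (0 < ∫ g, (f g * (if x < g then (1:ℝ) else 0)
          + (1 - f g) * (if x < -g then (1:ℝ) else 0)) ∂stdG)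


/-- Points of `ℝ³` carrying the coordinates `(G, X, W)`. -/
abbrev Pt : Type := ℝ × ℝ × ℝ

/-- First coordinate `G`. -/
def Gc : Pt → ℝ := fun q => q.1

/-- Second coordinate `X`. -/
def Xc : Pt → ℝ := fun q => q.2.1

/-- Third coordinate `W`. -/
def Wc : Pt → ℝ := fun q => q.2.2

/-- The inner product `⟨h₁,h₂⟩_P = E_P[h₁h₂]`. -/
def ip (P : Measure Pt) (h₁ h₂ : Pt → ℝ) : ℝ := ∫ q, h₁ q * h₂ q ∂P

/-- The norm `‖h‖_P = ⟨h,h⟩_P^{1/2}`. -/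
def pnorm (P : Measure Pt) (h : Pt → ℝ) : ℝ := Real.sqrt (ip P h h)

/-- Projection onto the orthogonal complement of `W`: `Π_{W⊥}(h) = h − ⟨h,W⟩_P·W`. -/
def projW (P : Measure Pt) (h : Pt → ℝ) : Pt → ℝ := fun q => h q - ip P h Wc * Wc q

/-- Partial derivative of `F_κ` in its first argument. -/
def d1F (f : ℝ → ℝ) (κ c₁ c₂ : ℝ) : ℝ := deriv (fun t => Fk f κ t c₂) c₁

/-- Partial derivative of `F_κ` in its second argument. -/
def d2F (f : ℝ → ℝ) (κ c₁ c₂ : ℝ) : ℝ := deriv (fun t => Fk f κ c₁ t) c₂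

/-- `ψ*(0) = min_{c ∈ ℝ} F₀(c,1)²`. -/
def psiStar0 (f : ℝ → ℝ) : ℝ := ⨅ c : ℝ, (Fk f 0 c 1) ^ 2

/-- The functional `𝓡_{ψ,κ,P}(h) = ψ^{−1/2}·F_κ(⟨h, X^{1/2}W⟩_P, ‖Π_{W⊥}(X^{1/2}h)‖_P)
+ ⟨h, X^{1/2}·Π_{W⊥}(G)⟩_P`. -/
def Rfun (f : ℝ → ℝ) (P : Measure Pt) (ψ κ : ℝ) (h : Pt → ℝ) : ℝ :=
  (Real.sqrt ψ)⁻¹ *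
      Fk f κ (ip P h (fun q => Real.sqrt (Xc q) * Wc q))
        (pnorm P (projW P (fun q => Real.sqrt (Xc q) * h q)))
    + ip P h (fun q => Real.sqrt (Xc q) * projW P Gc q)

/-- `ζ(P) = ‖X^{−1/2}W‖_P^{−1}`. -/
def zetaP (P : Measure Pt) : ℝ := (pnorm P (fun q => (Real.sqrt (Xc q))⁻¹ * Wc q))⁻¹

/-- `ζ = (E_μ[X⁻¹W²])^{−1/2}` for `(X,W) ~ μ`. -/
def zetaMu (μ : Measure (ℝ × ℝ)) : ℝ := (Real.sqrt (∫ q, (q.1)⁻¹ * q.2 ^ 2 ∂μ))⁻¹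

/-- `ω = (E_μ[(1 − ζ²X⁻¹)²W²])^{1/2}`. -/
def omegaMu (μ : Measure (ℝ × ℝ)) : ℝ :=
  Real.sqrt (∫ q, (1 - (zetaMu μ) ^ 2 * (q.1)⁻¹) ^ 2 * q.2 ^ 2 ∂μ)

/-- `ψ₊(κ)`. -/
def psiPlus (f : ℝ → ℝ) (μ : Measure (ℝ × ℝ)) (κ : ℝ) : ℝ :=
  if 0 < d1F f κ (zetaMu μ) 0 then 0
  else (d2F f κ (zetaMu μ) 0) ^ 2 - (omegaMu μ) ^ 2 * (d1F f κ (zetaMu μ) 0) ^ 2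

/-- `ψ₋(κ)`. -/
def psiMinus (f : ℝ → ℝ) (μ : Measure (ℝ × ℝ)) (κ : ℝ) : ℝ :=
  if 0 < d1F f κ (-(zetaMu μ)) 0 then 0
  else (d2F f κ (-(zetaMu μ)) 0) ^ 2 - (omegaMu μ) ^ 2 * (d1F f κ (-(zetaMu μ)) 0) ^ 2

/-- `ψ↓(κ) = max{ψ*(0), ψ₊(κ), ψ₋(κ)}`. -/
def psiDown (f : ℝ → ℝ) (μ : Measure (ℝ × ℝ)) (κ : ℝ) : ℝ :=
  max (max (psiStar0 f) (psiPlus f μ κ)) (psiMinus f μ κ)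

/-- The system of equations with expectations over `(X,W) ~ μ`:
with `A = ∂₁F_κ(c₁,c₂) − c₁c₂⁻¹∂₂F_κ(c₁,c₂)` and
`D = c₂⁻¹∂₂F_κ(c₁,c₂)·X^{1/2} + ψ^{1/2}·s·X^{−1/2}`,
`−c₁ = E_μ[A·W²·X^{1/2}/D]`, `c₁² + c₂² = E_μ[(ψX + A²W²X)/D²]`, `1 = E_μ[(ψ + A²W²)/D²]`. -/
def SolSysMu (f : ℝ → ℝ) (μ : Measure (ℝ × ℝ)) (ψ κ c₁ c₂ s : ℝ) : Prop :=
  (-c₁ = ∫ q, (d1F f κ c₁ c₂ - c₁ * c₂⁻¹ * d2F f κ c₁ c₂) * q.2 ^ 2 * Real.sqrt q.1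
      / (c₂⁻¹ * d2F f κ c₁ c₂ * Real.sqrt q.1 + Real.sqrt ψ * s * (Real.sqrt q.1)⁻¹) ∂μ)
  ∧ (c₁ ^ 2 + c₂ ^ 2 = ∫ q,
      (ψ * q.1 + (d1F f κ c₁ c₂ - c₁ * c₂⁻¹ * d2F f κ c₁ c₂) ^ 2 * q.2 ^ 2 * q.1)
      / (c₂⁻¹ * d2F f κ c₁ c₂ * Real.sqrt q.1 + Real.sqrt ψ * s * (Real.sqrt q.1)⁻¹) ^ 2 ∂μ)
  ∧ (1 = ∫ q,
      (ψ + (d1F f κ c₁ c₂ - c₁ * c₂⁻¹ * d2F f κ c₁ c₂) ^ 2 * q.2 ^ 2)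
      / (c₂⁻¹ * d2F f κ c₁ c₂ * Real.sqrt q.1 + Real.sqrt ψ * s * (Real.sqrt q.1)⁻¹) ^ 2 ∂μ)

/-- `T(ψ,κ) = ψ^{−1/2}(F_κ(c₁,c₂) − c₁∂₁F_κ(c₁,c₂) − c₂∂₂F_κ(c₁,c₂)) − s`. -/
def Tval (f : ℝ → ℝ) (ψ κ c₁ c₂ s : ℝ) : ℝ :=
  (Real.sqrt ψ)⁻¹ * (Fk f κ c₁ c₂ - c₁ * d1F f κ c₁ c₂ - c₂ * d2F f κ c₁ c₂) - s

/-- The Euclidean (ℓ²) norm of a finitely-indexed vector. -/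
def l2 {ι : Type*} [Fintype ι] (v : ι → ℝ) : ℝ := Real.sqrt (∑ i, v i ^ 2)

/-- Standard Gaussian measure on `ι → ℝ`. -/
def stdGaussianPi (ι : Type*) [Fintype ι] : Measure (ι → ℝ) :=
  Measure.pi fun _ : ι => stdG

/-- Projection of `v` orthogonal to the unit vector `w`: `Π_{w⊥}v = v − ⟨w,v⟩w`. -/
def projv {ι : Type*} [Fintype ι] (w v : ι → ℝ) : ι → ℝ :=
  fun j => v j - (∑ k, w k * v k) * w j

/-- Empirical measure of finitely many points of `ℝ²`. -/
def empMeas (P : ℕ) (pt : Fin P → ℝ × ℝ) : Measure (ℝ × ℝ) :=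
  ((P : ENNReal))⁻¹ • ∑ i : Fin P, Measure.dirac (pt i)

/-- The objective function of the problem defining `ξ⁽²⁾_{n,ψ,κ}`. -/
def obj2 (p : ℕ) (ψ κ : ℝ) (fρ : ℝ → ℝ) (Λ w : Fin p → ℝ) (g : Fin p → ℝ)
    (θ : Fin p → ℝ) : ℝ :=
  (Real.sqrt ψ)⁻¹ * Fk fρ κ (∑ j, Real.sqrt (Λ j) * w j * θ j)
      (l2 (projv w fun j => Real.sqrt (Λ j) * θ j))
    + (Real.sqrt (p : ℝ))⁻¹ * ∑ j, g j * projv w (fun j' => Real.sqrt (Λ j') * θ j') j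

/-!
The function `F_κ` is convex and differentiable, and the objective is
`r·F_κ(⟨w,v⟩, ‖Π_{w⊥}v‖) + ⟨h, Π_{w⊥}v⟩` with `r = ψ^{−1/2}`, `h = p^{−1/2}·g`, `v = Λ^{1/2}θ`.

For (b), freeze the gradient of `F_κ` at `(c₁, c₂)`. The Lagrangian of the resulting quadratic
problem with multiplier `s` has the explicit stationary point
`θ* = −(ψ^{1/2}·p^{−1/2}·g + A·w)/D(Λ)`. Fourth moments and Borel–Cantelli for the Gaussian sums,
and weak convergence for the sums over the spectrum, show that the overlaps of `θ*` converge almost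
surely to integrals against `μ`; the system of equations says precisely that the limits are `c₁`,
`c₂` and that `‖θ*‖ → 1`. The subgradient inequality of `F_κ` at `(c₁, c₂)` and Cauchy–Schwarz then
bound the objective at any `θ` of the unit ball from below by `T + (s/2)·‖θ − θ*‖² − o(1)`, while
the rescaled `θ*` attains `T + o(1)`. This gives the limit and the overlaps of the minimizers.
Stretching `θ*` slightly beyond the ball brings the convex objective strictly below its minimum over
the ball, so no minimizer lies in the interior, and strict convexity of the ball makes it unique.

For (a), `F_κ` is even in `c₂`, so `∂₂F_κ(±ζ, 0) = 0` and `ψ₊, ψ₋ ≤ 0`. Hence `ψ ≤ ψ*(0)`, and by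
homogeneity of `F₀` and `F₀ < F_κ` one has `ψ^{1/2}·b < F_κ(a, b)` for all `b ≥ 0`. This gap is
uniform on compact sets, whereas `‖p^{−1/2}·g‖ → 1`.
-/

section PositivePart

variable {α : Type*} [MeasurableSpace α] {m : Measure α} {U V : α → ℝ}

/-- The `L²` norm of the positive part of `U`; up to the choice of `m` and of an affine `U` this
is `F_κ`. -/
def posNorm (m : Measure α) (U : α → ℝ) : ℝ := √(∫ a, max (U a) 0 ^ 2 ∂m)

lemma sq_posNorm : posNorm m U ^ 2 = ∫ a, max (U a) 0 ^ 2 ∂m :=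
  sq_sqrt <| integral_nonneg fun _ => sq_nonneg _

lemma memLp_posPart (hU : MemLp U 2 m) : MemLp (fun a => max (U a) 0) 2 m := hU.pos_part

lemma integrable_posPart_mul (hU : MemLp U 2 m) (hV : MemLp V 2 m) :
    Integrable (fun a => max (U a) 0 * V a) m :=
  (memLp_posPart hU).integrable_mul hV

lemma integral_posPart_mul_posPart_le (hU : MemLp U 2 m) (hV : MemLp V 2 m) :
    ∫ a, max (U a) 0 * max (V a) 0 ∂m ≤ posNorm m U * posNorm m V := by
  have h := integral_mul_le_Lp_mul_Lq_of_nonneg (μ := m) (p := 2) (q := 2)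
    (f := fun a => max (U a) 0) (g := fun a => max (V a) 0) HolderConjugate.two_two
    (ae_of_all _ fun _ => le_max_right _ _) (ae_of_all _ fun _ => le_max_right _ _)
    (by simpa using memLp_posPart hU) (by simpa using memLp_posPart hV)
  simpa only [posNorm, sqrt_eq_rpow, rpow_ofNat] using h

lemma sq_posNorm_add_integral_le (hU : MemLp U 2 m) (hV : MemLp V 2 m) :
    posNorm m U ^ 2 + ∫ a, max (U a) 0 * V a ∂m ≤ posNorm m U * posNorm m (fun a => U a + V a) := by
  have hU' := (memLp_posPart hU).integrable_sq
  have hUV : MemLp (fun a => U a + V a) 2 m := hU.add hV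
  rw [sq_posNorm, ← integral_add hU' (integrable_posPart_mul hU hV)]
  refine (integral_mono (hU'.add (integrable_posPart_mul hU hV))
    (integrable_posPart_mul hU (memLp_posPart hUV)) fun a => ?_).trans
      (integral_posPart_mul_posPart_le hU hUV)
  calc max (U a) 0 ^ 2 + max (U a) 0 * V a = max (U a) 0 * (U a + V a) := by
        rcases max_cases (U a) 0 with h | h <;> rw [h.1] <;> ring
    _ ≤ max (U a) 0 * max (U a + V a) 0 :=
        mul_le_mul_of_nonneg_left (le_max_left _ _) (le_max_right _ _)

lemma sq_posPart_add_le (x y : ℝ) :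
    max (x + y) 0 ^ 2 ≤ max x 0 ^ 2 + 2 * (max x 0 * y) + y ^ 2 := by
  rcases max_cases x 0 with hx | hx <;> rcases max_cases (x + y) 0 with hy | hy <;>
    rw [hx.1, hy.1] <;> nlinarith

lemma sq_posNorm_add_le (hU : MemLp U 2 m) (hV : MemLp V 2 m) :
    posNorm m (fun a => U a + V a) ^ 2
      ≤ posNorm m U ^ 2 + 2 * (∫ a, max (U a) 0 * V a ∂m) + ∫ a, V a ^ 2 ∂m := by
  have hU' := (memLp_posPart hU).integrable_sq
  have hUV := (integrable_posPart_mul hU hV).const_mul 2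
  have hsum : Integrable (fun a => max (U a) 0 ^ 2 + 2 * (max (U a) 0 * V a)) m := hU'.add hUV
  rw [sq_posNorm, sq_posNorm, ← integral_const_mul, ← integral_add hU' hUV,
    ← integral_add hsum hV.integrable_sq]
  exact integral_mono (memLp_posPart (hU.add hV)).integrable_sq (hsum.add hV.integrable_sq)
    fun a => sq_posPart_add_le (U a) (V a)

lemma le_posNorm_add (hU : MemLp U 2 m) (hV : MemLp V 2 m) (h0 : 0 < posNorm m U) :
    posNorm m U + (∫ a, max (U a) 0 * V a ∂m) / posNorm m U
      ≤ posNorm m (fun a => U a + V a) := by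
  rw [← mul_le_mul_iff_right₀ h0, mul_add, mul_div_cancel₀ _ h0.ne', ← sq]
  exact sq_posNorm_add_integral_le hU hV

lemma posNorm_add_le (hU : MemLp U 2 m) (hV : MemLp V 2 m) (h0 : 0 < posNorm m U) :
    posNorm m (fun a => U a + V a) ≤ posNorm m U + (∫ a, max (U a) 0 * V a ∂m) / posNorm m U
      + (∫ a, V a ^ 2 ∂m) / (2 * posNorm m U) := by
  set N := posNorm m U
  set N' := posNorm m fun a => U a + V a
  calc N' ≤ (N ^ 2 + N' ^ 2) / (2 * N) := by
        rw [le_div_iff₀ (by positivity)]; linarith [two_mul_le_add_sq N N']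
    _ ≤ (N ^ 2 + (N ^ 2 + 2 * (∫ a, max (U a) 0 * V a ∂m) + ∫ a, V a ^ 2 ∂m)) / (2 * N) := by
        gcongr; exact sq_posNorm_add_le hU hV
    _ = _ := by field_simp; ring

lemma hasDerivAt_of_abs_sub_le_sq {F : ℝ → ℝ} {x a K : ℝ}
    (h : ∀ y, |F y - F x - a * (y - x)| ≤ K * (y - x) ^ 2) : HasDerivAt F a x := by
  rw [hasDerivAt_iff_isLittleO]
  refine (Asymptotics.IsBigO.of_bound K (Eventually.of_forall fun y => ?_)).trans_isLittleO
    (Asymptotics.isLittleO_pow_sub_sub x one_lt_two)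
  simpa only [norm_eq_abs, abs_pow, sq_abs, smul_eq_mul, mul_comm a] using h y

lemma hasDerivAt_posNorm_add_mul (hU : MemLp U 2 m) (hV : MemLp V 2 m) (h0 : 0 < posNorm m U)
    (x : ℝ) : HasDerivAt (fun t => posNorm m fun a => U a + (t - x) * V a)
      ((∫ a, max (U a) 0 * V a ∂m) / posNorm m U) x := by
  refine hasDerivAt_of_abs_sub_le_sq (K := (∫ a, V a ^ 2 ∂m) / (2 * posNorm m U)) fun t => ?_
  have hlow := le_posNorm_add hU (hV.const_mul (t - x)) h0
  have hupp := posNorm_add_le hU (hV.const_mul (t - x)) h0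
  have hlin : ∫ a, max (U a) 0 * ((t - x) * V a) ∂m = (∫ a, max (U a) 0 * V a ∂m) * (t - x) := by
    rw [← integral_mul_const]; congr! 2; ring
  have hquad : ∫ a, ((t - x) * V a) ^ 2 ∂m = (∫ a, V a ^ 2 ∂m) * (t - x) ^ 2 := by
    rw [← integral_mul_const]; congr! 2; ring
  rw [hlin, mul_div_right_comm] at hlow hupp
  rw [hquad, mul_div_right_comm (∫ a, V a ^ 2 ∂m)] at hupp
  have hK : 0 ≤ (∫ a, V a ^ 2 ∂m) / (2 * posNorm m U) * (t - x) ^ 2 := by positivity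
  simp only [sub_self, zero_mul, add_zero, abs_le]
  constructor <;> linarith [hK]

lemma posNorm_smul {c : ℝ} (hc : 0 ≤ c) : posNorm m (fun a => c * U a) = c * posNorm m U := by
  have hpos (a : α) : max (c * U a) 0 = c * max (U a) 0 := by
    rw [mul_max_of_nonneg _ _ hc, mul_zero]
  simp only [posNorm, hpos, mul_pow, integral_const_mul]
  rw [sqrt_mul (sq_nonneg c), sqrt_sq hc]

lemma posNorm_pos_iff (hU : MemLp U 2 m) : 0 < posNorm m U ↔ ¬ U ≤ᵐ[m] 0 := by
  rw [posNorm, sqrt_pos, (integral_nonneg fun _ => sq_nonneg _).lt_iff_ne', ne_eq,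
    integral_eq_zero_iff_of_nonneg (fun _ => sq_nonneg _) (memLp_posPart hU).integrable_sq,
    not_iff_not]
  refine eventually_congr (Eventually.of_forall fun a => ?_)
  simp

lemma posNorm_lt_posNorm_add_const [IsFiniteMeasure m] (hU : MemLp U 2 m) (h0 : 0 < posNorm m U)
    {κ : ℝ} (hκ : 0 < κ) : posNorm m U < posNorm m fun a => U a + κ := by
  have hU' := memLp_posPart hU
  have hpos : 0 < ∫ a, max (U a) 0 * κ ∂m := by
    rw [integral_mul_const]
    refine mul_pos ((integral_nonneg fun _ => le_max_right _ _).lt_of_ne' fun h => ?_) hκ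
    rw [integral_eq_zero_iff_of_nonneg (fun _ => le_max_right _ _)
      (hU'.integrable one_le_two)] at h
    refine (posNorm_pos_iff hU).1 h0 (h.mono fun a ha => ?_)
    simpa using ha
  calc posNorm m U < posNorm m U + (∫ a, max (U a) 0 * κ ∂m) / posNorm m U :=
        lt_add_of_pos_right _ (div_pos hpos h0)
    _ ≤ _ := le_posNorm_add hU (memLp_const κ) h0

end PositivePart

section SignedLaw

variable {f : ℝ → ℝ}

instance : IsProbabilityMeasure stdG := inferInstanceAs (IsProbabilityMeasure (gaussianReal 0 1))

instance : stdG.IsNegInvariant := ⟨by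
  rw [Measure.neg_def]
  exact (gaussianReal_map_neg (μ := 0) (v := 1)).trans (by rw [neg_zero]; rfl)⟩

lemma memLp_id_stdG {q : ENNReal} (hq : q ≠ ⊤) : MemLp (fun x : ℝ => x) q stdG := by
  lift q to NNReal using hq
  exact memLp_id_gaussianReal q

lemma integral_id_stdG : ∫ z, z ∂stdG = 0 := integral_id_gaussianReal

/-- The law of `T = Y·G`, where `G` is standard Gaussian and `P(Y = 1 | G) = f(G)`. -/
def signedLaw (f : ℝ → ℝ) : Measure ℝ :=
  stdG.withDensity (fun x => ENNReal.ofReal (f x)) +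
    (stdG.withDensity fun x => ENNReal.ofReal (1 - f x)).map Neg.neg

lemma signedLaw_le (hf01 : ∀ x, f x ∈ Icc (0 : ℝ) 1) : signedLaw f ≤ (2 : ENNReal) • stdG := by
  have hle {u : ℝ → ℝ} (hu : ∀ x, u x ≤ 1) :
      stdG.withDensity (fun x => ENNReal.ofReal (u x)) ≤ stdG :=
    calc _ ≤ stdG.withDensity 1 :=
          withDensity_mono (ae_of_all _ fun x => ENNReal.ofReal_le_one.2 (hu x))
      _ = stdG := withDensity_one
  rw [two_smul]
  refine add_le_add (hle fun x => (hf01 x).2) ?_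
  calc _ ≤ stdG.map Neg.neg :=
        Measure.map_mono (hle fun x => sub_le_self 1 (hf01 x).1) measurable_neg
    _ = stdG := Measure.map_neg_eq_self stdG

lemma isFiniteMeasure_signedLaw (hf01 : ∀ x, f x ∈ Icc (0 : ℝ) 1) : IsFiniteMeasure (signedLaw f) :=
  have := stdG.smul_finite ENNReal.ofNat_ne_top (c := 2)
  isFiniteMeasure_of_le _ (signedLaw_le hf01)

lemma memLp_signedLaw (hf01 : ∀ x, f x ∈ Icc (0 : ℝ) 1) {φ : ℝ → ℝ} {q : ENNReal}
    (hφ : MemLp φ q stdG) : MemLp φ q (signedLaw f) :=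
  hφ.of_measure_le_smul (by simp) (signedLaw_le hf01)

lemma integral_withDensity_ofReal {u : ℝ → ℝ} (hu : Measurable u) (hu0 : ∀ x, 0 ≤ u x)
    (ν : Measure ℝ) (φ : ℝ → ℝ) :
    ∫ x, φ x ∂ν.withDensity (fun x => ENNReal.ofReal (u x)) = ∫ x, u x * φ x ∂ν := by
  rw [integral_withDensity_eq_integral_toReal_smul (by fun_prop) (by simp)]
  simp only [ENNReal.toReal_ofReal (hu0 _), smul_eq_mul]

lemma integral_signedLaw (hf : Measurable f) (hf01 : ∀ x, f x ∈ Icc (0 : ℝ) 1) {φ : ℝ → ℝ}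
    (hφ : Integrable φ stdG) :
    ∫ t, φ t ∂signedLaw f = ∫ g, (f g * φ g + (1 - f g) * φ (-g)) ∂stdG := by
  have hφν : Integrable φ (signedLaw f) :=
    memLp_one_iff_integrable.1 (memLp_signedLaw hf01 (memLp_one_iff_integrable.2 hφ))
  have hneg : MeasurableEmbedding (Neg.neg : ℝ → ℝ) := (MeasurableEquiv.neg ℝ).measurableEmbedding
  have hbdd {u : ℝ → ℝ} (hu : Measurable u) (hu01 : ∀ x, u x ∈ Icc (0 : ℝ) 1) {χ : ℝ → ℝ}
      (hχ : Integrable χ stdG) : Integrable (fun x => u x * χ x) stdG :=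
    hχ.bdd_mul (c := 1) hu.aestronglyMeasurable <| ae_of_all _ fun x => by
      rw [norm_eq_abs, abs_of_nonneg (hu01 x).1]; exact (hu01 x).2
  have hfm : Measurable fun x => 1 - f x := measurable_const.sub hf
  have hf' : ∀ x, 1 - f x ∈ Icc (0 : ℝ) 1 := fun x =>
    ⟨sub_nonneg.2 (hf01 x).2, sub_le_self 1 (hf01 x).1⟩
  rw [signedLaw, integral_add_measure (hφν.mono_measure (Measure.le_add_right le_rfl))
    (hφν.mono_measure (Measure.le_add_left le_rfl)),
    hneg.integral_map, integral_withDensity_ofReal hf (fun x => (hf01 x).1),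
    integral_withDensity_ofReal hfm (fun x => (hf' x).1),
    ← integral_add (hbdd hf hf01 hφ) (hbdd hfm hf' hφ.comp_neg)]

lemma signedLaw_real_apply (hf : Measurable f) (hf01 : ∀ x, f x ∈ Icc (0 : ℝ) 1) {s : Set ℝ}
    (hs : MeasurableSet s) : (signedLaw f).real s =
      ∫ g, (f g * s.indicator 1 g + (1 - f g) * s.indicator 1 (-g)) ∂stdG := by
  rw [← integral_indicator_one hs]
  exact integral_signedLaw hf hf01 ((integrable_const (1 : ℝ)).indicator hs)

end SignedLaw

section Fk

variable {f : ℝ → ℝ}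

lemma memLp_affine {ν : Measure ℝ} [IsFiniteMeasure ν] (hν : MemLp (fun x : ℝ => x) 2 ν)
    (a c₁ c₂ : ℝ) :
    MemLp (fun q : ℝ × ℝ => a - c₁ * q.1 - c₂ * q.2) 2 (ν.prod stdG) :=
  ((memLp_const a).sub ((hν.comp_fst stdG).const_mul c₁)).sub
    (((memLp_id_stdG (by simp)).comp_snd ν).const_mul c₂)

lemma memLp_affine_signedLaw (hf01 : ∀ x, f x ∈ Icc (0 : ℝ) 1) (a c₁ c₂ : ℝ) :
    MemLp (fun q : ℝ × ℝ => a - c₁ * q.1 - c₂ * q.2) 2 ((signedLaw f).prod stdG) :=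
  have := isFiniteMeasure_signedLaw hf01
  memLp_affine (memLp_signedLaw hf01 (memLp_id_stdG (by simp))) a c₁ c₂

lemma Fk_eq_posNorm (hf : Measurable f) (hf01 : ∀ x, f x ∈ Icc (0 : ℝ) 1) (κ c₁ c₂ : ℝ) :
    Fk f κ c₁ c₂ = posNorm ((signedLaw f).prod stdG) fun q => κ - c₁ * q.1 - c₂ * q.2 := by
  have := isFiniteMeasure_signedLaw hf01
  have hz (a : ℝ) : Integrable (fun z => max (a - c₂ * z) 0 ^ 2) stdG :=
    (memLp_posPart ((memLp_const a).sub ((memLp_id_stdG (by simp)).const_mul c₂))).integrable_sq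
  have hgz := memLp_posPart (memLp_affine (memLp_id_stdG (by simp)) κ c₁ c₂)
  rw [Fk, posNorm,
    integral_prod _ (memLp_posPart (memLp_affine_signedLaw hf01 κ c₁ c₂)).integrable_sq,
    integral_signedLaw hf hf01 hgz.integrable_sq.integral_prod_left]
  simp only [integral_add ((hz _).const_mul _) ((hz _).const_mul _), integral_const_mul, mul_neg,
    sub_neg_eq_add]

lemma Fk_zero_smul (hf : Measurable f) (hf01 : ∀ x, f x ∈ Icc (0 : ℝ) 1) {t : ℝ} (ht : 0 ≤ t)
    (c₁ c₂ : ℝ) : Fk f 0 (t * c₁) (t * c₂) = t * Fk f 0 c₁ c₂ := by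
  rw [Fk_eq_posNorm hf hf01, Fk_eq_posNorm hf hf01, ← posNorm_smul ht]
  congr! 2
  ring

lemma Fk_neg_snd (f : ℝ → ℝ) (κ c₁ c₂ : ℝ) : Fk f κ c₁ (-c₂) = Fk f κ c₁ c₂ := by
  rw [Fk, Fk]
  congr! 3 with g
  rw [← integral_neg_eq_self _ stdG]
  simp only [neg_mul_neg]

lemma d2F_zero (f : ℝ → ℝ) (κ c₁ : ℝ) : d2F f κ c₁ 0 = 0 := by
  have h := deriv_comp_neg (fun t => Fk f κ c₁ t) 0
  simp only [Fk_neg_snd, neg_zero] at h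
  exact self_eq_neg.1 h

lemma psiPlus_nonpos (f : ℝ → ℝ) (μ : Measure (ℝ × ℝ)) (κ : ℝ) : psiPlus f μ κ ≤ 0 := by
  rw [psiPlus, d2F_zero]
  split_ifs
  · exact le_rfl
  · rw [← mul_pow, sub_nonpos, zero_pow two_ne_zero]; exact sq_nonneg _

lemma psiMinus_nonpos (f : ℝ → ℝ) (μ : Measure (ℝ × ℝ)) (κ : ℝ) : psiMinus f μ κ ≤ 0 := by
  rw [psiMinus, d2F_zero]
  split_ifs
  · exact le_rfl
  · rw [← mul_pow, sub_nonpos, zero_pow two_ne_zero]; exact sq_nonneg _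

lemma psiDown_eq_psiStar0 (f : ℝ → ℝ) (μ : Measure (ℝ × ℝ)) (κ : ℝ) :
    psiDown f μ κ = psiStar0 f := by
  have h0 : 0 ≤ psiStar0 f := Real.iInf_nonneg fun _ => sq_nonneg _
  rw [psiDown, max_eq_left ((psiPlus_nonpos f μ κ).trans h0),
    max_eq_left ((psiMinus_nonpos f μ κ).trans h0)]

lemma sqrt_psiStar0_mul_le (hf : Measurable f) (hf01 : ∀ x, f x ∈ Icc (0 : ℝ) 1) (a : ℝ) {b : ℝ}
    (hb : 0 ≤ b) :
    √(psiStar0 f) * b ≤ Fk f 0 a b := by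
  obtain rfl | hb := hb.eq_or_lt
  · rw [mul_zero]; exact sqrt_nonneg _
  have hle : √(psiStar0 f) ≤ Fk f 0 (a / b) 1 := sqrt_le_iff.2
    ⟨sqrt_nonneg _, ciInf_le ⟨0, forall_mem_range.2 fun _ => sq_nonneg _⟩ (a / b)⟩
  calc √(psiStar0 f) * b ≤ b * Fk f 0 (a / b) 1 := by
        rw [mul_comm]; exact mul_le_mul_of_nonneg_left hle hb.le
    _ = Fk f 0 a b := by
        rw [← Fk_zero_smul hf hf01 hb.le, mul_div_cancel₀ _ hb.ne', mul_one]

lemma convexOn_univ_of_exists_affine_le {E : Type*} [AddCommGroup E] [Module ℝ E] {F : E → ℝ}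
    (h : ∀ x, ∃ L : E →ₗ[ℝ] ℝ, ∀ y, F x + L (y - x) ≤ F y) : ConvexOn ℝ univ F := by
  refine ⟨convex_univ, fun x _ y _ a b ha hb hab => ?_⟩
  obtain ⟨L, hL⟩ := h (a • x + b • y)
  have hzero : a • (x - (a • x + b • y)) + b • (y - (a • x + b • y)) = 0 := by
    obtain rfl := eq_sub_of_add_eq hab
    module
  have hLzero := congrArg L hzero
  simp only [map_add, map_smul, map_zero, smul_eq_mul] at hLzero
  simp only [smul_eq_mul]
  linear_combination -hLzero - F (a • x + b • y) * hab + a * hL x + b * hL y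

/-- The hypotheses on the function `x ↦ P(Y = 1 | G = x)` under which `F_κ` is studied. -/
structure IsLink (f : ℝ → ℝ) : Prop where
  measurable : Measurable f
  mem_Icc : ∀ x, f x ∈ Icc (0 : ℝ) 1
  nonDeg : NonDeg f

namespace IsLink

lemma signedLaw_real_Iio_pos (hf : IsLink f) (x : ℝ) : 0 < (signedLaw f).real (Iio x) := by
  rw [signedLaw_real_apply hf.measurable hf.mem_Icc measurableSet_Iio]
  simpa only [indicator_apply, mem_Iio, Pi.one_apply] using (hf.nonDeg x).1

lemma signedLaw_real_Ioi_pos (hf : IsLink f) (x : ℝ) : 0 < (signedLaw f).real (Ioi x) := by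
  rw [signedLaw_real_apply hf.measurable hf.mem_Icc measurableSet_Ioi]
  simpa only [indicator_apply, mem_Ioi, Pi.one_apply] using (hf.nonDeg x).2

variable {κ : ℝ}

lemma Fk_pos (hf : IsLink f) (hκ : 0 < κ) (c₁ c₂ : ℝ) : 0 < Fk f κ c₁ c₂ := by
  have := isFiniteMeasure_signedLaw hf.mem_Icc
  rw [Fk_eq_posNorm hf.measurable hf.mem_Icc,
    posNorm_pos_iff (memLp_affine_signedLaw hf.mem_Icc ..)]
  intro hnonpos
  have hle : ∀ᵐ t ∂signedLaw f, κ ≤ c₁ * t := by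
    filter_upwards [Measure.ae_ae_of_ae_prod hnonpos] with t ht
    have hz : Integrable (fun z : ℝ => c₂ * z) stdG :=
      ((memLp_id_stdG (q := 1) (by simp)).integrable le_rfl).const_mul c₂
    have hmean : ∫ z, κ - c₁ * t - c₂ * z ∂stdG ≤ 0 := integral_nonpos_of_ae ht
    rw [integral_sub (integrable_const _) hz, integral_const_mul, integral_id_stdG,
      integral_const, probReal_univ, one_smul] at hmean
    linarith
  have hnull {s : Set ℝ} (hs : ∀ t ∈ s, c₁ * t ≤ 0) : (signedLaw f).real s = 0 := by
    rw [measureReal_eq_zero_iff]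
    exact measure_mono_null (fun t ht => not_le.2 ((hs t ht).trans_lt hκ)) hle
  rcases le_total 0 c₁ with h | h
  · exact (hf.signedLaw_real_Iio_pos 0).ne'
      (hnull fun t ht => mul_nonpos_of_nonneg_of_nonpos h (le_of_lt ht))
  · exact (hf.signedLaw_real_Ioi_pos 0).ne'
      (hnull fun t ht => mul_nonpos_of_nonpos_of_nonneg h (le_of_lt ht))

lemma Fk_zero_lt_Fk (hf : IsLink f) (hκ : 0 < κ) (c₁ c₂ : ℝ) : Fk f 0 c₁ c₂ < Fk f κ c₁ c₂ := by
  have := isFiniteMeasure_signedLaw hf.mem_Icc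
  rcases le_or_gt (Fk f 0 c₁ c₂) 0 with h0 | h0
  · exact h0.trans_lt (hf.Fk_pos hκ c₁ c₂)
  rw [Fk_eq_posNorm hf.measurable hf.mem_Icc] at h0
  rw [Fk_eq_posNorm hf.measurable hf.mem_Icc, Fk_eq_posNorm hf.measurable hf.mem_Icc]
  convert posNorm_lt_posNorm_add_const (memLp_affine_signedLaw hf.mem_Icc ..) h0 hκ using 3
  ring

lemma hasDerivAt_Fk_fst (hf : IsLink f) (hκ : 0 < κ) (c₁ c₂ : ℝ) :
    HasDerivAt (fun t => Fk f κ t c₂)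
      ((∫ q, max (κ - c₁ * q.1 - c₂ * q.2) 0 * -q.1 ∂(signedLaw f).prod stdG)
        / Fk f κ c₁ c₂) c₁ := by
  have h0 := hf.Fk_pos hκ c₁ c₂
  simp only [Fk_eq_posNorm hf.measurable hf.mem_Icc] at h0 ⊢
  have hT := memLp_affine_signedLaw hf.mem_Icc 0 1 0
  convert hasDerivAt_posNorm_add_mul (memLp_affine_signedLaw hf.mem_Icc κ c₁ c₂) hT h0 c₁
    using 5 <;> ring

lemma hasDerivAt_Fk_snd (hf : IsLink f) (hκ : 0 < κ) (c₁ c₂ : ℝ) :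
    HasDerivAt (fun t => Fk f κ c₁ t)
      ((∫ q, max (κ - c₁ * q.1 - c₂ * q.2) 0 * -q.2 ∂(signedLaw f).prod stdG)
        / Fk f κ c₁ c₂) c₂ := by
  have h0 := hf.Fk_pos hκ c₁ c₂
  simp only [Fk_eq_posNorm hf.measurable hf.mem_Icc] at h0 ⊢
  have hZ := memLp_affine_signedLaw hf.mem_Icc 0 0 1
  convert hasDerivAt_posNorm_add_mul (memLp_affine_signedLaw hf.mem_Icc κ c₁ c₂) hZ h0 c₂
    using 5 <;> ring

lemma integral_posPart_mul_div_Fk (hf : IsLink f) (hκ : 0 < κ) (c₁ c₂ e₁ e₂ : ℝ) :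
    (∫ q, max (κ - c₁ * q.1 - c₂ * q.2) 0 * (0 - e₁ * q.1 - e₂ * q.2) ∂(signedLaw f).prod stdG)
        / Fk f κ c₁ c₂
      = d1F f κ c₁ c₂ * e₁ + d2F f κ c₁ c₂ * e₂ := by
  have hU := memLp_affine_signedLaw hf.mem_Icc κ c₁ c₂
  have hT := integrable_posPart_mul hU (memLp_affine_signedLaw hf.mem_Icc 0 1 0)
  have hZ := integrable_posPart_mul hU (memLp_affine_signedLaw hf.mem_Icc 0 0 1)
  simp only [one_mul, zero_mul, zero_sub, sub_zero] at hT hZ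
  rw [d1F, d2F, (hf.hasDerivAt_Fk_fst hκ c₁ c₂).deriv, (hf.hasDerivAt_Fk_snd hκ c₁ c₂).deriv,
    div_mul_eq_mul_div, div_mul_eq_mul_div, ← add_div, ← integral_mul_const, ← integral_mul_const,
    ← integral_add (hT.mul_const _) (hZ.mul_const _)]
  congr! 3; ring

lemma Fk_add_gradient_le (hf : IsLink f) (hκ : 0 < κ) (c₁ c₂ d₁ d₂ : ℝ) :
    Fk f κ c₁ c₂ + d1F f κ c₁ c₂ * (d₁ - c₁) + d2F f κ c₁ c₂ * (d₂ - c₂) ≤ Fk f κ d₁ d₂ := by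
  have h0 := hf.Fk_pos hκ c₁ c₂
  rw [add_assoc, ← hf.integral_posPart_mul_div_Fk hκ]
  simp only [Fk_eq_posNorm hf.measurable hf.mem_Icc] at h0 ⊢
  convert le_posNorm_add (memLp_affine_signedLaw hf.mem_Icc κ c₁ c₂)
    (memLp_affine_signedLaw hf.mem_Icc 0 (d₁ - c₁) (d₂ - c₂)) h0 using 3
  ring

lemma hasDerivAt_Fk_smul (hf : IsLink f) (hκ : 0 < κ) (c₁ c₂ : ℝ) :
    HasDerivAt (fun t => Fk f κ (t * c₁) (t * c₂)) (c₁ * d1F f κ c₁ c₂ + c₂ * d2F f κ c₁ c₂) 1 := by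
  have h0 := hf.Fk_pos hκ c₁ c₂
  rw [mul_comm c₁, mul_comm c₂, ← hf.integral_posPart_mul_div_Fk hκ]
  simp only [Fk_eq_posNorm hf.measurable hf.mem_Icc] at h0 ⊢
  convert hasDerivAt_posNorm_add_mul (memLp_affine_signedLaw hf.mem_Icc κ c₁ c₂)
    (memLp_affine_signedLaw hf.mem_Icc 0 c₁ c₂) h0 1 using 4
  ring

lemma convexOn_Fk (hf : IsLink f) (hκ : 0 < κ) :
    ConvexOn ℝ univ fun c : ℝ × ℝ => Fk f κ c.1 c.2 := by
  refine convexOn_univ_of_exists_affine_le fun c =>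
    ⟨d1F f κ c.1 c.2 • LinearMap.fst ℝ ℝ ℝ + d2F f κ c.1 c.2 • LinearMap.snd ℝ ℝ ℝ, fun d => ?_⟩
  simpa [add_assoc] using hf.Fk_add_gradient_le hκ c.1 c.2 d.1 d.2

lemma continuous_Fk (hf : IsLink f) (hκ : 0 < κ) : Continuous fun c : ℝ × ℝ => Fk f κ c.1 c.2 :=
  (hf.convexOn_Fk hκ).locallyLipschitz.continuous

lemma d2F_nonneg (hf : IsLink f) (hκ : 0 < κ) (c₁ : ℝ) {c₂ : ℝ} (hc₂ : 0 ≤ c₂) :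
    0 ≤ d2F f κ c₁ c₂ := by
  obtain rfl | hc₂ := hc₂.eq_or_lt
  · exact (d2F_zero f κ c₁).ge
  have h := hf.Fk_add_gradient_le hκ c₁ c₂ c₁ (-c₂)
  rw [Fk_neg_snd] at h
  exact nonneg_of_mul_nonneg_left (by linarith : 0 ≤ d2F f κ c₁ c₂ * c₂) hc₂

lemma monotoneOn_Fk_snd (hf : IsLink f) (hκ : 0 < κ) (c₁ : ℝ) :
    MonotoneOn (fun t => Fk f κ c₁ t) (Ici 0) := fun a ha b _ hab => by
  have h := hf.Fk_add_gradient_le hκ c₁ a c₁ b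
  have := mul_nonneg (hf.d2F_nonneg hκ c₁ ha) (sub_nonneg.2 hab)
  dsimp only
  linarith

end IsLink

end Fk

section FourthMoment

variable {Ω : Type*} [MeasurableSpace Ω] {P : Measure Ω}

lemma integrable_pow_of_memLp [IsFiniteMeasure P] {X : Ω → ℝ} {n k : ℕ} (hX : MemLp X n P)
    (hk : k ≤ n) : Integrable (fun ω => X ω ^ k) P := by
  refine (integrable_norm_iff (hX.aestronglyMeasurable.pow k)).1 ?_
  simpa only [Pi.pow_apply, norm_pow] using
    (hX.mono_exponent (by exact_mod_cast hk)).integrable_norm_pow'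

lemma integral_add_pow_of_indepFun [IsFiniteMeasure P] {X Y : Ω → ℝ} {n : ℕ}
    (hXY : IndepFun X Y P) (hX : MemLp X n P) (hY : MemLp Y n P) :
    ∫ ω, (X ω + Y ω) ^ n ∂P =
      ∑ k ∈ Finset.range (n + 1), (∫ ω, X ω ^ k ∂P) * (∫ ω, Y ω ^ (n - k) ∂P) * n.choose k := by
  have hXk {k} (hk : k ∈ Finset.range (n + 1)) : Integrable (fun ω => X ω ^ k) P :=
    integrable_pow_of_memLp hX (Finset.mem_range_succ_iff.1 hk)
  have hYk (k : ℕ) : Integrable (fun ω => Y ω ^ (n - k)) P :=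
    integrable_pow_of_memLp hY (Nat.sub_le n k)
  have hind (k : ℕ) : IndepFun (fun ω => X ω ^ k) (fun ω => Y ω ^ (n - k)) P :=
    hXY.comp (measurable_id.pow_const k) (measurable_id.pow_const (n - k))
  have hmul {k} (hk : k ∈ Finset.range (n + 1)) :
      Integrable (fun ω => X ω ^ k * Y ω ^ (n - k)) P := (hind k).integrable_mul (hXk hk) (hYk k)
  simp_rw [add_pow]
  rw [integral_finsetSum _ fun k hk => (hmul hk).mul_const _]
  refine Finset.sum_congr rfl fun k hk => ?_
  rw [integral_mul_const, (hind k).integral_fun_mul_eq_mul_integral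
    (hXk hk).aestronglyMeasurable (hYk k).aestronglyMeasurable]

variable [IsProbabilityMeasure P]

lemma sq_integral_sq_le {X : Ω → ℝ} (hX : MemLp X 4 P) :
    (∫ ω, X ω ^ 2 ∂P) ^ 2 ≤ ∫ ω, X ω ^ 4 ∂P := by
  have h2 : MemLp (fun ω => X ω ^ 2) 2 P := by
    refine (memLp_two_iff_integrable_sq (hX.aestronglyMeasurable.pow 2)).2 ?_
    simpa only [Pi.pow_apply, ← pow_mul] using integrable_pow_of_memLp (n := 4) hX le_rfl
  have h := variance_nonneg (fun ω => X ω ^ 2) P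
  rw [variance_eq_sub h2] at h
  simpa only [Pi.pow_apply, ← pow_mul, sub_nonneg] using h

lemma integral_sum_pow_four_le {ι : Type*} {ξ : ι → Ω → ℝ} (hind : iIndepFun ξ P)
    (hξ : ∀ i, MemLp (ξ i) 4 P) (h0 : ∀ i, ∫ ω, ξ i ω ∂P = 0) (s : Finset ι) :
    ∫ ω, (∑ i ∈ s, ξ i ω) ^ 4 ∂P ≤ 3 * (∑ i ∈ s, √(∫ ω, ξ i ω ^ 4 ∂P)) ^ 2 := by
  classical
  have hae i : AEMeasurable (ξ i) P := (hξ i).aemeasurable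
  have hsq i : ∫ ω, ξ i ω ^ 2 ∂P ≤ √(∫ ω, ξ i ω ^ 4 ∂P) :=
    le_sqrt_of_sq_le (sq_integral_sq_le (hξ i))
  induction s using Finset.induction_on with
  | empty => simp
  | insert i s hi ih =>
    have hS : MemLp (fun ω => ∑ j ∈ s, ξ j ω) 4 P := memLp_finsetSum s fun j _ => hξ j
    have hS0 : ∫ ω, ∑ j ∈ s, ξ j ω ∂P = 0 := by
      rw [integral_finsetSum s fun j _ => (hξ j).integrable (by norm_num)]
      exact Finset.sum_eq_zero fun j _ => h0 j
    have hS2 : ∫ ω, (∑ j ∈ s, ξ j ω) ^ 2 ∂P ≤ ∑ j ∈ s, √(∫ ω, ξ j ω ^ 4 ∂P) := by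
      rw [← variance_of_integral_eq_zero hS.aemeasurable hS0, ← Finset.sum_fn,
        IndepFun.variance_sum (fun j _ => (hξ j).mono_exponent (by norm_num))
          fun j _ k _ hjk => hind.indepFun hjk]
      refine Finset.sum_le_sum fun j _ => ?_
      rw [variance_of_integral_eq_zero (hae j) (h0 j)]
      exact hsq j
    have hindS : IndepFun (fun ω => ∑ j ∈ s, ξ j ω) (ξ i) P := by
      simpa only [Finset.sum_fn] using hind.indepFun_finsetSum_of_notMem₀ hae hi
    have h4 : √(∫ ω, ξ i ω ^ 4 ∂P) ^ 2 = ∫ ω, ξ i ω ^ 4 ∂P :=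
      sq_sqrt (integral_nonneg fun ω => by positivity)
    have hprod := mul_le_mul hS2 (hsq i) (integral_nonneg fun ω => sq_nonneg _)
      (Finset.sum_nonneg fun j _ => sqrt_nonneg _)
    have hexpand : ∫ ω, (∑ j ∈ s, ξ j ω + ξ i ω) ^ 4 ∂P = ∫ ω, (∑ j ∈ s, ξ j ω) ^ 4 ∂P +
        6 * ((∫ ω, (∑ j ∈ s, ξ j ω) ^ 2 ∂P) * ∫ ω, ξ i ω ^ 2 ∂P) + ∫ ω, ξ i ω ^ 4 ∂P := by
      rw [integral_add_pow_of_indepFun (n := 4) hindS hS (hξ i)]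
      norm_num [Finset.sum_range_succ, hS0, h0 i, Nat.choose]
      ring
    simp_rw [Finset.sum_insert hi, add_comm (ξ i _)]
    rw [hexpand]
    nlinarith [sq_nonneg √(∫ ω, ξ i ω ^ 4 ∂P)]

end FourthMoment

section Gaussian

variable {Ω : Type*} [MeasurableSpace Ω] {P : Measure Ω}

lemma map_eval_of_map_eq_stdGaussianPi {ι : Type*} [Fintype ι] {g : Ω → ι → ℝ} (hg : Measurable g)
    (hlaw : P.map g = stdGaussianPi ι) (i : ι) : P.map (fun ω => g ω i) = stdG := by
  rw [← (measurePreserving_eval (fun _ : ι => stdG) i).map_eq, ← stdGaussianPi, ← hlaw,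
    Measure.map_map (measurable_pi_apply i) hg]
  rfl

variable [IsProbabilityMeasure P]

lemma iIndepFun_of_map_eq_stdGaussianPi {ι : Type*} [Fintype ι] {g : Ω → ι → ℝ} (hg : Measurable g)
    (hlaw : P.map g = stdGaussianPi ι) : iIndepFun (fun i ω => g ω i) P := by
  have hgi i : AEMeasurable (fun ω => g ω i) P := by fun_prop
  rw [iIndepFun_iff_map_fun_eq_pi_map hgi]
  simp only [map_eval_of_map_eq_stdGaussianPi hg hlaw]
  exact hlaw

lemma integral_sum_mul_pow_four_le {ι : Type*} [Fintype ι] {g : Ω → ι → ℝ} (hg : Measurable g)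
    (hlaw : P.map g = stdGaussianPi ι) {h : ℝ → ℝ} (hh : Measurable h) (h4 : MemLp h 4 stdG)
    (h0 : ∫ x, h x ∂stdG = 0) (a : ι → ℝ) :
    Integrable (fun ω => (∑ i, a i * h (g ω i)) ^ 4) P ∧
    ∫ ω, (∑ i, a i * h (g ω i)) ^ 4 ∂P ≤ 3 * (∫ x, h x ^ 4 ∂stdG) * (∑ i, a i ^ 2) ^ 2 := by
  have hgi i : MeasurePreserving (fun ω => g ω i) P stdG :=
    ⟨by fun_prop, map_eval_of_map_eq_stdGaussianPi hg hlaw i⟩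
  have hmap i {φ : ℝ → ℝ} (hφ : Measurable φ) : ∫ ω, φ (g ω i) ∂P = ∫ x, φ x ∂stdG := by
    rw [← (hgi i).map_eq, integral_map (hgi i).measurable.aemeasurable hφ.aestronglyMeasurable]
  have hLp i : MemLp (fun ω => a i * h (g ω i)) 4 P :=
    (h4.comp_measurePreserving (hgi i)).const_mul (a i)
  have hind : iIndepFun (fun i ω => a i * h (g ω i)) P :=
    (iIndepFun_of_map_eq_stdGaussianPi hg hlaw).comp (fun i x => a i * h x) fun i => by fun_prop
  have hmean i : ∫ ω, a i * h (g ω i) ∂P = 0 := by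
    rw [integral_const_mul, hmap i hh, h0, mul_zero]
  refine ⟨integrable_pow_of_memLp (n := 4) (memLp_finsetSum _ fun i _ => hLp i) le_rfl,
    (integral_sum_pow_four_le hind hLp hmean Finset.univ).trans_eq ?_⟩
  have hsqrt i : √(∫ ω, (a i * h (g ω i)) ^ 4 ∂P) = a i ^ 2 * √(∫ x, h x ^ 4 ∂stdG) := by
    simp_rw [mul_pow]
    rw [integral_const_mul, hmap i (hh.pow_const 4), sqrt_mul (by positivity),
      show a i ^ 4 = (a i ^ 2) ^ 2 by ring, sqrt_sq (sq_nonneg _)]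
  simp_rw [hsqrt]
  rw [← Finset.sum_mul, mul_pow, sq_sqrt (integral_nonneg fun x => by positivity)]
  ring

lemma ae_tendsto_zero_of_summable_integral_norm {Ω E : Type*} [MeasurableSpace Ω] {P : Measure Ω}
    [NormedAddCommGroup E] {X : ℕ → Ω → E} (hX : ∀ n, Integrable (X n) P)
    (hsum : Summable fun n => ∫ ω, ‖X n ω‖ ∂P) :
    ∀ᵐ ω ∂P, Tendsto (fun n => X n ω) atTop (𝓝 0) := by
  have h := summable_norm_of_tsum_eLpNorm_ne_top le_rfl (fun n => (hX n).aestronglyMeasurable) <| by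
    simpa only [eLpNorm_one_eq_lintegral_enorm, ← ofReal_integral_norm_eq_lintegral_enorm (hX _)]
      using hsum.tsum_ofReal_ne_top
  filter_upwards [h] with ω hω
  exact tendsto_zero_iff_norm_tendsto_zero.2 hω.tendsto_atTop_zero

lemma memLp_sq_sub_one_stdG : MemLp (fun x : ℝ => x ^ 2 - 1) 4 stdG := by
  have h := (memLp_id_stdG (q := 8) (by norm_num)).norm_rpow_div 2
  have h8 : (8 / 2 : ENNReal) = 4 := by
    rw [show (8 : ENNReal) = 4 * 2 by norm_num, ENNReal.mul_div_cancel_right (by simp) (by simp)]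
  rw [h8] at h
  exact (by simpa using h : MemLp (fun x : ℝ => x ^ 2) 4 stdG).sub (memLp_const 1)

lemma integral_sq_sub_one_stdG : ∫ x, (x ^ 2 - 1) ∂stdG = 0 := by
  have h : ∫ x, x ^ 2 ∂stdG = 1 := by
    rw [← variance_of_integral_eq_zero (X := fun x => x) aemeasurable_id integral_id_stdG]
    simp [stdG]
  have hint : Integrable (fun x : ℝ => x ^ 2) stdG :=
    integrable_pow_of_memLp (X := id) (n := 2) (memLp_id_stdG (by norm_num)) le_rfl
  rw [integral_sub hint (integrable_const 1), h]
  simp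

variable {p : ℕ → ℕ} {g : (n : ℕ) → Ω → Fin (p n) → ℝ}

lemma ae_tendsto_sum_mul_zero (hg : ∀ n, Measurable (g n))
    (hlaw : ∀ n, P.map (g n) = stdGaussianPi (Fin (p n))) {h : ℝ → ℝ} (hh : Measurable h)
    (h4 : MemLp h 4 stdG) (h0 : ∫ x, h x ∂stdG = 0) {a : (n : ℕ) → Fin (p n) → ℝ}
    (ha : Summable fun n => (∑ i, a n i ^ 2) ^ 2) :
    ∀ᵐ ω ∂P, Tendsto (fun n => ∑ i, a n i * h (g n ω i)) atTop (𝓝 0) := by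
  have hmom n := integral_sum_mul_pow_four_le (hg n) (hlaw n) hh h4 h0 (a n)
  have hsum : Summable fun n => ∫ ω, ‖(∑ i, a n i * h (g n ω i)) ^ 4‖ ∂P :=
    (ha.mul_left _).of_nonneg_of_le (fun n => integral_nonneg fun ω => norm_nonneg _) fun n => by
      simpa only [norm_pow, norm_eq_abs, Even.pow_abs (by decide : Even 4)] using (hmom n).2
  filter_upwards [ae_tendsto_zero_of_summable_integral_norm (fun n => (hmom n).1) hsum] with ω hω
  rw [tendsto_zero_iff_abs_tendsto_zero] at hω ⊢
  have hroot := (hω.sqrt).sqrt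
  simp only [sqrt_zero] at hroot
  refine hroot.congr fun n => ?_
  rw [Function.comp, Function.comp, abs_pow, pow_mul _ 2 2, sqrt_sq (sq_nonneg _),
    sqrt_sq (abs_nonneg _)]

variable {a : (n : ℕ) → Fin (p n) → ℝ} {C : ℝ}

lemma summable_sq_of_le_mul_inv (hp : Summable fun n => ((p n : ℝ) ^ 2)⁻¹)
    (ha : ∀ n, ∑ i, a n i ^ 2 ≤ C * (p n : ℝ)⁻¹) : Summable fun n => (∑ i, a n i ^ 2) ^ 2 :=
  (hp.mul_left (C ^ 2)).of_nonneg_of_le (fun n => sq_nonneg _) fun n => by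
    simpa only [mul_pow, inv_pow] using
      pow_le_pow_left₀ (Finset.sum_nonneg fun i _ => sq_nonneg (a n i)) (ha n) 2

lemma ae_tendsto_inv_sqrt_mul_sum_zero (hp : Summable fun n => ((p n : ℝ) ^ 2)⁻¹)
    (hg : ∀ n, Measurable (g n)) (hlaw : ∀ n, P.map (g n) = stdGaussianPi (Fin (p n)))
    (ha : ∀ n, ∑ i, a n i ^ 2 ≤ C) :
    ∀ᵐ ω ∂P, Tendsto (fun n => (√(p n))⁻¹ * ∑ i, a n i * g n ω i) atTop (𝓝 0) := by
  have hle n : ∑ i, ((√(p n))⁻¹ * a n i) ^ 2 ≤ C * (p n : ℝ)⁻¹ := by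
    simp_rw [mul_pow, inv_pow, sq_sqrt (Nat.cast_nonneg (p n)), ← Finset.mul_sum]
    rw [mul_comm C]
    gcongr
    exact ha n
  filter_upwards [ae_tendsto_sum_mul_zero hg hlaw measurable_id (memLp_id_stdG (by norm_num))
    integral_id_stdG (summable_sq_of_le_mul_inv hp hle)] with ω hω
  simpa only [Finset.mul_sum, mul_assoc, id_eq] using hω

lemma ae_tendsto_inv_mul_sum_sq_sub_one_zero (hp : Summable fun n => ((p n : ℝ) ^ 2)⁻¹)
    (hg : ∀ n, Measurable (g n)) (hlaw : ∀ n, P.map (g n) = stdGaussianPi (Fin (p n)))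
    (ha : ∀ n i, |a n i| ≤ C) :
    ∀ᵐ ω ∂P, Tendsto (fun n => (p n : ℝ)⁻¹ * ∑ i, a n i * (g n ω i ^ 2 - 1)) atTop (𝓝 0) := by
  have hle n : ∑ i, ((p n : ℝ)⁻¹ * a n i) ^ 2 ≤ C ^ 2 * (p n : ℝ)⁻¹ := calc
    _ ≤ ∑ _i : Fin (p n), ((p n : ℝ)⁻¹) ^ 2 * C ^ 2 := by
      gcongr with i
      rw [mul_pow, ← sq_abs (a n i)]
      gcongr
      exact ha n i
    _ = C ^ 2 * (p n : ℝ)⁻¹ := by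
      rw [Finset.sum_const, Finset.card_univ, Fintype.card_fin, nsmul_eq_mul]
      rcases eq_or_ne (p n : ℝ) 0 with h | h
      · simp [h]
      · field_simp
  filter_upwards [ae_tendsto_sum_mul_zero hg hlaw (h := fun x => x ^ 2 - 1) (by fun_prop)
    memLp_sq_sub_one_stdG integral_sq_sub_one_stdG (summable_sq_of_le_mul_inv hp hle)] with ω hω
  simpa only [Finset.mul_sum, mul_assoc] using hω

end Gaussian

lemma summable_inv_sq_of_tendsto_div {p : ℕ → ℕ} {ψ : ℝ} (hψ : 0 < ψ)
    (hp : Tendsto (fun n => (p n : ℝ) / n) atTop (𝓝 ψ)) :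
    Summable fun n => ((p n : ℝ) ^ 2)⁻¹ := by
  refine .of_norm_bounded_eventually_nat
    ((Real.summable_nat_pow_inv.2 one_lt_two).mul_left (4 / ψ ^ 2)) ?_
  filter_upwards [hp.eventually (lt_mem_nhds (half_lt_self hψ)), eventually_gt_atTop 0] with n hn h0
  have hn0 : (0 : ℝ) < n := Nat.cast_pos.2 h0
  have hlt : ψ / 2 * n < p n := (lt_div_iff₀ hn0).1 hn
  calc ‖((p n : ℝ) ^ 2)⁻¹‖ = ((p n : ℝ) ^ 2)⁻¹ := norm_of_nonneg (by positivity)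
    _ ≤ ((ψ / 2 * n) ^ 2)⁻¹ := by gcongr
    _ = 4 / ψ ^ 2 * ((n : ℝ) ^ 2)⁻¹ := by field_simp; norm_num

section WeakConvergence

variable {ι E : Type*} [TopologicalSpace E] [MeasurableSpace E] [OpensMeasurableSpace E]
  {l : Filter ι} {ν : ι → Measure E} {μ : Measure E} {φ V : E → ℝ}

lemma eventually_lt_integral_of_tendsto_integral_bounded
    (hν : ∀ φ : BoundedContinuousFunction E ℝ,
      Tendsto (fun i => ∫ x, φ x ∂ν i) l (𝓝 (∫ x, φ x ∂μ)))
    (hφ : Continuous φ) (h0 : 0 ≤ φ) (hφμ : Integrable φ μ) (hφν : ∀ i, Integrable φ (ν i))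
    {c : ℝ} (hc : c < ∫ x, φ x ∂μ) : ∀ᶠ i in l, c < ∫ x, φ x ∂ν i := by
  have hbound (K : ℕ) x : ‖min (φ x) K‖ ≤ K := by
    rw [norm_of_nonneg (le_min (h0 x) K.cast_nonneg)]
    exact min_le_right _ _
  have htrunc : Tendsto (fun K : ℕ => ∫ x, min (φ x) K ∂μ) atTop (𝓝 (∫ x, φ x ∂μ)) := by
    refine tendsto_integral_of_dominated_convergence φ
      (fun K => (hφ.min continuous_const).aestronglyMeasurable) hφμ
      (fun K => ae_of_all _ fun x => ?_) (ae_of_all _ fun x => ?_)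
    · rw [norm_of_nonneg (le_min (h0 x) K.cast_nonneg)]
      exact min_le_left _ _
    · refine tendsto_const_nhds.congr' ?_
      filter_upwards [tendsto_natCast_atTop_atTop.eventually_ge_atTop (φ x)] with K hK
      rw [min_eq_left hK]
  obtain ⟨K, hK⟩ := (htrunc.eventually (lt_mem_nhds hc)).exists
  filter_upwards [(hν (.ofNormedAddCommGroup _ (hφ.min continuous_const) K (hbound K))).eventually
    (lt_mem_nhds hK)] with i hi
  refine hi.trans_le (integral_mono_of_nonneg (ae_of_all _ fun x => le_min (h0 x) K.cast_nonneg)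
    (hφν i) (ae_of_all _ fun x => min_le_left _ _))

lemma eventually_lt_integral_of_abs_le
    (hν : ∀ φ : BoundedContinuousFunction E ℝ,
      Tendsto (fun i => ∫ x, φ x ∂ν i) l (𝓝 (∫ x, φ x ∂μ)))
    (hφ : Continuous φ) (hV : Continuous V) (hle : ∀ x, |φ x| ≤ V x)
    (hφμ : Integrable φ μ) (hφν : ∀ i, Integrable φ (ν i))
    (hVμ : Integrable V μ) (hVν : ∀ i, Integrable V (ν i))
    (hVlim : Tendsto (fun i => ∫ x, V x ∂ν i) l (𝓝 (∫ x, V x ∂μ)))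
    {c : ℝ} (hc : c < ∫ x, φ x ∂μ) : ∀ᶠ i in l, c < ∫ x, φ x ∂ν i := by
  set a := ∫ x, V x ∂μ
  set b := ∫ x, φ x ∂μ with hb
  have hlt : a + (b + c) / 2 < ∫ x, (V x + φ x) ∂μ := by
    rw [integral_add hVμ hφμ, ← hb]
    linarith
  have hsum : ∀ᶠ i in l, a + (b + c) / 2 < ∫ x, (V x + φ x) ∂ν i :=
    eventually_lt_integral_of_tendsto_integral_bounded hν (hV.add hφ)
      (fun x => neg_le_iff_add_nonneg'.1 (abs_le.1 (hle x)).1) (hVμ.add hφμ)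
      (fun i => (hVν i).add (hφν i)) hlt
  have hVc : a < a + (b - c) / 2 := by linarith
  filter_upwards [hsum, hVlim.eventually (gt_mem_nhds hVc)] with i hi hVi
  rw [integral_add (hVν i) (hφν i)] at hi
  linarith

lemma tendsto_integral_of_abs_le_of_tendsto_integral
    (hν : ∀ φ : BoundedContinuousFunction E ℝ,
      Tendsto (fun i => ∫ x, φ x ∂ν i) l (𝓝 (∫ x, φ x ∂μ)))
    (hφ : Continuous φ) (hV : Continuous V) (hle : ∀ x, |φ x| ≤ V x)
    (hφμ : Integrable φ μ) (hφν : ∀ i, Integrable φ (ν i))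
    (hVμ : Integrable V μ) (hVν : ∀ i, Integrable V (ν i))
    (hVlim : Tendsto (fun i => ∫ x, V x ∂ν i) l (𝓝 (∫ x, V x ∂μ))) :
    Tendsto (fun i => ∫ x, φ x ∂ν i) l (𝓝 (∫ x, φ x ∂μ)) := by
  refine tendsto_order.2 ⟨fun c hc =>
    eventually_lt_integral_of_abs_le hν hφ hV hle hφμ hφν hVμ hVν hVlim hc, fun c hc => ?_⟩
  have hneg : -c < ∫ x, -φ x ∂μ := by
    rw [integral_neg]
    exact neg_lt_neg hc
  have hev : ∀ᶠ i in l, -c < ∫ x, -φ x ∂ν i :=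
    eventually_lt_integral_of_abs_le hν hφ.neg hV (fun x => (abs_neg (φ x)).trans_le (hle x))
      hφμ.neg (fun i => (hφν i).neg) hVμ hVν hVlim hneg
  filter_upwards [hev] with i hi
  rw [integral_neg] at hi
  exact neg_lt_neg_iff.1 hi

end WeakConvergence

lemma exists_boundedContinuousFunction_eqOn {X : Type*} [TopologicalSpace X] [NormalSpace X]
    [T2Space X] {s : Set X} (hs : IsCompact s) {φ : X → ℝ} (hφ : ContinuousOn φ s) :
    ∃ φ' : BoundedContinuousFunction X ℝ, EqOn φ' φ s := by
  have := isCompact_iff_compactSpace.1 hs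
  obtain ⟨φ', -, h⟩ := (BoundedContinuousFunction.mkOfCompact
    ⟨s.domRestrict φ, hφ.domRestrict⟩).exists_norm_eq_domRestrict_eq_of_closed hs.isClosed
  exact ⟨φ', fun x hx => DFunLike.congr_fun h ⟨x, hx⟩⟩

section EmpiricalMeasure

variable {P : ℕ} (pt : Fin P → ℝ × ℝ) {φ : ℝ × ℝ → ℝ}

lemma integrable_empMeas (hφ : StronglyMeasurable φ) : Integrable φ (empMeas P pt) := by
  rcases eq_or_ne P 0 with rfl | hP
  · simp [empMeas]
  · exact (integrable_finsetSum_measure.2 fun i _ => integrable_dirac' hφ (by simp)).smul_measure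
      (by simpa using hP)

lemma integral_empMeas (hφ : StronglyMeasurable φ) :
    ∫ q, φ q ∂empMeas P pt = (P : ℝ)⁻¹ * ∑ i, φ (pt i) := by
  rw [empMeas, integral_smul_measure,
    integral_finsetSum_measure fun i _ => integrable_dirac' hφ (by simp)]
  simp [integral_dirac' _ _ hφ]

end EmpiricalMeasure

/-- The deterministic data of the problem: spectra `Λ n ⊆ [xmin, xmax]` and unit vectors `w n` such
that the empirical measures of the pairs `(Λ n i, √p · w n i)` converge weakly to `μ`, where
`E_μ[W²] = 1`. Since `‖w n‖² = 1`, no second moment is lost in the limit. -/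
structure SpectralLimit {p : ℕ → ℕ} (xmin xmax : ℝ) (Λ w : (n : ℕ) → Fin (p n) → ℝ)
    (μ : Measure (ℝ × ℝ)) : Prop where
  pos : 0 < xmin
  mem_Icc : ∀ n i, Λ n i ∈ Icc xmin xmax
  sum_sq : ∀ n, ∑ i, w n i ^ 2 = 1
  ae_mem_Icc : ∀ᵐ q ∂μ, q.1 ∈ Icc xmin xmax
  integral_sq : ∫ q, q.2 ^ 2 ∂μ = 1
  tendsto : ∀ φ : BoundedContinuousFunction (ℝ × ℝ) ℝ,
    Tendsto (fun n => ∫ q, φ q ∂empMeas (p n) fun i => (Λ n i, √(p n) * w n i)) atTop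
      (𝓝 (∫ q, φ q ∂μ))

namespace SpectralLimit

variable {p : ℕ → ℕ} {xmin xmax : ℝ} {Λ w : (n : ℕ) → Fin (p n) → ℝ} {μ : Measure (ℝ × ℝ)}
  {φ : ℝ → ℝ}

lemma natCast_ne_zero (h : SpectralLimit xmin xmax Λ w μ) (n : ℕ) : (p n : ℝ) ≠ 0 := by
  intro hp
  have : IsEmpty (Fin (p n)) := by
    rw [Nat.cast_eq_zero.1 hp]
    infer_instance
  simpa using h.sum_sq n

lemma integrable_sq (h : SpectralLimit xmin xmax Λ w μ) :
    Integrable (fun q : ℝ × ℝ => q.2 ^ 2) μ :=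
  .of_integral_ne_zero (by simp [h.integral_sq])

lemma exists_abs_le (h : SpectralLimit xmin xmax Λ w μ) (hφ : ContinuousOn φ (Icc xmin xmax)) :
    ∃ C, ∀ n i, |φ (Λ n i)| ≤ C := by
  obtain ⟨C, hC⟩ := isCompact_Icc.exists_bound_of_continuousOn hφ
  exact ⟨C, fun n i => hC _ (h.mem_Icc n i)⟩

lemma integrable_mul_sq (h : SpectralLimit xmin xmax Λ w μ)
    (hφ : ContinuousOn φ (Icc xmin xmax)) : Integrable (fun q => φ q.1 * q.2 ^ 2) μ := by
  obtain ⟨φ', hφ'⟩ := exists_boundedContinuousFunction_eqOn isCompact_Icc hφ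
  have hint : Integrable (fun q : ℝ × ℝ => φ' q.1 * q.2 ^ 2) μ := h.integrable_sq.bdd_mul
    (φ'.continuous.comp continuous_fst).aestronglyMeasurable
    (ae_of_all _ fun q => φ'.norm_coe_le_norm _)
  refine hint.congr ?_
  filter_upwards [h.ae_mem_Icc] with q hq
  rw [hφ' hq]

lemma tendsto_sum_mul_sq (h : SpectralLimit xmin xmax Λ w μ)
    (hφ : ContinuousOn φ (Icc xmin xmax)) :
    Tendsto (fun n => ∑ i, φ (Λ n i) * w n i ^ 2) atTop (𝓝 (∫ q, φ q.1 * q.2 ^ 2 ∂μ)) := by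
  obtain ⟨φ', hφ'⟩ := exists_boundedContinuousFunction_eqOn isCompact_Icc hφ
  have hemp (φ : BoundedContinuousFunction ℝ ℝ) (n : ℕ) :
      ∫ q, φ q.1 * q.2 ^ 2 ∂empMeas (p n) (fun i => (Λ n i, √(p n) * w n i)) =
        ∑ i, φ (Λ n i) * w n i ^ 2 := by
    have hp := h.natCast_ne_zero n
    rw [integral_empMeas _ (Continuous.stronglyMeasurable (by fun_prop)), Finset.mul_sum]
    refine Finset.sum_congr rfl fun i _ => ?_
    rw [mul_pow, sq_sqrt (Nat.cast_nonneg _)]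
    field_simp
  have hmass (n : ℕ) : ∫ q, ‖φ'‖ * q.2 ^ 2 ∂empMeas (p n) (fun i => (Λ n i, √(p n) * w n i)) =
      ‖φ'‖ := by
    simpa [← Finset.mul_sum, h.sum_sq] using hemp (.const ℝ ‖φ'‖) n
  have key := tendsto_integral_of_abs_le_of_tendsto_integral h.tendsto
    (φ := fun q => φ' q.1 * q.2 ^ 2) (V := fun q => ‖φ'‖ * q.2 ^ 2) (by fun_prop) (by fun_prop)
    (fun q => by
      rw [abs_mul, abs_of_nonneg (sq_nonneg q.2)]
      exact mul_le_mul_of_nonneg_right (φ'.norm_coe_le_norm q.1) (sq_nonneg q.2))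
    (h.integrable_mul_sq φ'.continuous.continuousOn)
    (fun n => integrable_empMeas _ (Continuous.stronglyMeasurable (by fun_prop)))
    (h.integrable_sq.const_mul _)
    (fun n => integrable_empMeas _ (Continuous.stronglyMeasurable (by fun_prop)))
    (by simp_rw [hmass, integral_const_mul, h.integral_sq, mul_one]; exact tendsto_const_nhds)
  have hae : (fun q => φ' q.1 * q.2 ^ 2) =ᵐ[μ] fun q => φ q.1 * q.2 ^ 2 := by
    filter_upwards [h.ae_mem_Icc] with q hq
    rw [hφ' hq]
  rw [← integral_congr_ae hae]
  refine key.congr fun n => ?_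
  rw [hemp]
  exact Finset.sum_congr rfl fun i _ => by rw [hφ' (h.mem_Icc n i)]

lemma integrable_fst [IsFiniteMeasure μ] (h : SpectralLimit xmin xmax Λ w μ)
    (hφ : ContinuousOn φ (Icc xmin xmax)) : Integrable (fun q => φ q.1) μ := by
  obtain ⟨φ', hφ'⟩ := exists_boundedContinuousFunction_eqOn isCompact_Icc hφ
  refine ((φ'.compContinuous ⟨_, continuous_fst⟩).integrable μ).congr ?_
  filter_upwards [h.ae_mem_Icc] with q hq
  exact hφ' hq

lemma tendsto_inv_mul_sum (h : SpectralLimit xmin xmax Λ w μ)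
    (hφ : ContinuousOn φ (Icc xmin xmax)) :
    Tendsto (fun n => (p n : ℝ)⁻¹ * ∑ i, φ (Λ n i)) atTop (𝓝 (∫ q, φ q.1 ∂μ)) := by
  obtain ⟨φ', hφ'⟩ := exists_boundedContinuousFunction_eqOn isCompact_Icc hφ
  have key := h.tendsto (φ'.compContinuous ⟨_, continuous_fst⟩)
  simp only [BoundedContinuousFunction.compContinuous_apply, ContinuousMap.coe_mk] at key
  have hae : (fun q => φ' q.1) =ᵐ[μ] fun q => φ q.1 := by
    filter_upwards [h.ae_mem_Icc] with q hq using hφ' hq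
  rw [integral_congr_ae hae] at key
  refine key.congr fun n => ?_
  rw [integral_empMeas _ (Continuous.stronglyMeasurable (by fun_prop))]
  congr 1
  exact Finset.sum_congr rfl fun i _ => hφ' (h.mem_Icc n i)

variable {Ω : Type*} [MeasurableSpace Ω] {P : Measure Ω} [IsProbabilityMeasure P]
  {g : (n : ℕ) → Ω → Fin (p n) → ℝ} {α β : ℝ → ℝ}

lemma ae_tendsto_inv_sqrt_mul_sum_zero (h : SpectralLimit xmin xmax Λ w μ)
    (hp : Summable fun n => ((p n : ℝ) ^ 2)⁻¹) (hg : ∀ n, Measurable (g n))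
    (hlaw : ∀ n, P.map (g n) = stdGaussianPi (Fin (p n)))
    (hφ : ContinuousOn φ (Icc xmin xmax)) :
    ∀ᵐ ω ∂P, Tendsto (fun n => (√(p n))⁻¹ * ∑ i, φ (Λ n i) * w n i * g n ω i) atTop (𝓝 0) := by
  obtain ⟨C, hC⟩ := h.exists_abs_le hφ
  refine MaxMargin.ae_tendsto_inv_sqrt_mul_sum_zero hp hg hlaw (C := C ^ 2) fun n => ?_
  calc ∑ i, (φ (Λ n i) * w n i) ^ 2 ≤ ∑ i, C ^ 2 * w n i ^ 2 := by
        gcongr with i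
        rw [mul_pow, ← sq_abs (φ _)]
        gcongr
        exact hC n i
    _ = C ^ 2 := by rw [← Finset.mul_sum, h.sum_sq, mul_one]

lemma ae_tendsto_inv_mul_sum_mul_sq [IsFiniteMeasure μ] (h : SpectralLimit xmin xmax Λ w μ)
    (hp : Summable fun n => ((p n : ℝ) ^ 2)⁻¹) (hg : ∀ n, Measurable (g n))
    (hlaw : ∀ n, P.map (g n) = stdGaussianPi (Fin (p n)))
    (hφ : ContinuousOn φ (Icc xmin xmax)) :
    ∀ᵐ ω ∂P, Tendsto (fun n => (p n : ℝ)⁻¹ * ∑ i, φ (Λ n i) * g n ω i ^ 2) atTop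
      (𝓝 (∫ q, φ q.1 ∂μ)) := by
  obtain ⟨C, hC⟩ := h.exists_abs_le hφ
  filter_upwards [ae_tendsto_inv_mul_sum_sq_sub_one_zero hp hg hlaw hC] with ω hω
  simpa only [← mul_add, ← Finset.sum_add_distrib, mul_sub, mul_one, sub_add_cancel, zero_add]
    using hω.add (h.tendsto_inv_mul_sum hφ)

lemma ae_tendsto_sum_mul_sq_add [IsFiniteMeasure μ] (h : SpectralLimit xmin xmax Λ w μ)
    (hp : Summable fun n => ((p n : ℝ) ^ 2)⁻¹) (hg : ∀ n, Measurable (g n))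
    (hlaw : ∀ n, P.map (g n) = stdGaussianPi (Fin (p n)))
    (hφ : ContinuousOn φ (Icc xmin xmax)) (hα : ContinuousOn α (Icc xmin xmax))
    (hβ : ContinuousOn β (Icc xmin xmax)) :
    ∀ᵐ ω ∂P, Tendsto (fun n => ∑ i, φ (Λ n i) *
        (α (Λ n i) * ((√(p n))⁻¹ * g n ω i) + β (Λ n i) * w n i) ^ 2) atTop
      (𝓝 (∫ q, φ q.1 * (α q.1 ^ 2 + β q.1 ^ 2 * q.2 ^ 2) ∂μ)) := by
  have hφα : ContinuousOn (fun x => φ x * α x ^ 2) (Icc xmin xmax) := by fun_prop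
  have hφβ : ContinuousOn (fun x => φ x * β x ^ 2) (Icc xmin xmax) := by fun_prop
  have hcross : ContinuousOn (fun x => 2 * (φ x * α x * β x)) (Icc xmin xmax) := by fun_prop
  have hint : ∫ q, φ q.1 * (α q.1 ^ 2 + β q.1 ^ 2 * q.2 ^ 2) ∂μ =
      ∫ q, φ q.1 * α q.1 ^ 2 ∂μ + 0 + ∫ q, φ q.1 * β q.1 ^ 2 * q.2 ^ 2 ∂μ := by
    rw [add_zero, ← integral_add (h.integrable_fst hφα) (h.integrable_mul_sq hφβ)]
    simp only [mul_add, mul_assoc]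
  filter_upwards [h.ae_tendsto_inv_mul_sum_mul_sq hp hg hlaw hφα,
    h.ae_tendsto_inv_sqrt_mul_sum_zero hp hg hlaw hcross] with ω hsq hlin
  rw [hint]
  refine ((hsq.add hlin).add (h.tendsto_sum_mul_sq hφβ)).congr fun n => ?_
  simp_rw [Finset.mul_sum, ← Finset.sum_add_distrib]
  refine Finset.sum_congr rfl fun i _ => ?_
  have hsqrt : (p n : ℝ)⁻¹ = ((√(p n))⁻¹) ^ 2 := by rw [inv_pow, sq_sqrt (Nat.cast_nonneg _)]
  rw [hsqrt]
  ring

lemma ae_tendsto_sum_mul_mul_add (h : SpectralLimit xmin xmax Λ w μ)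
    (hp : Summable fun n => ((p n : ℝ) ^ 2)⁻¹) (hg : ∀ n, Measurable (g n))
    (hlaw : ∀ n, P.map (g n) = stdGaussianPi (Fin (p n)))
    (hφ : ContinuousOn φ (Icc xmin xmax)) (hα : ContinuousOn α (Icc xmin xmax))
    (hβ : ContinuousOn β (Icc xmin xmax)) :
    ∀ᵐ ω ∂P, Tendsto (fun n => ∑ i, φ (Λ n i) * w n i *
        (α (Λ n i) * ((√(p n))⁻¹ * g n ω i) + β (Λ n i) * w n i)) atTop
      (𝓝 (∫ q, φ q.1 * β q.1 * q.2 ^ 2 ∂μ)) := by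
  have hφα : ContinuousOn (fun x => φ x * α x) (Icc xmin xmax) := by fun_prop
  have hφβ : ContinuousOn (fun x => φ x * β x) (Icc xmin xmax) := by fun_prop
  filter_upwards [h.ae_tendsto_inv_sqrt_mul_sum_zero hp hg hlaw hφα] with ω hω
  have key := hω.add (h.tendsto_sum_mul_sq hφβ)
  rw [zero_add] at key
  refine key.congr fun n => ?_
  rw [Finset.mul_sum, ← Finset.sum_add_distrib]
  exact Finset.sum_congr rfl fun i _ => by ring

end SpectralLimit

section Perp

open scoped RealInnerProductSpace

variable {E : Type*} [NormedAddCommGroup E] [InnerProductSpace ℝ E] {w : E}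

/-- The projection `Π_{w⊥}` onto the orthogonal complement of the line spanned by `w`. -/
def perp (w : E) : E →L[ℝ] E := (ℝ ∙ w)ᗮ.starProjection

lemma perp_apply (hw : ‖w‖ = 1) (v : E) : perp w v = v - ⟪w, v⟫ • w := by
  rw [perp, Submodule.starProjection_orthogonal_val, Submodule.starProjection_unit_singleton ℝ hw]

lemma norm_perp_apply_le (w v : E) : ‖perp w v‖ ≤ ‖v‖ :=
  Submodule.norm_starProjection_apply_le _ v

lemma inner_perp_right (hw : ‖w‖ = 1) (u v : E) : ⟪u, perp w v⟫ = ⟪u, v⟫ - ⟪u, w⟫ * ⟪w, v⟫ := by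
  rw [perp_apply hw, inner_sub_right, inner_smul_right, mul_comm]

lemma inner_perp_perp (hw : ‖w‖ = 1) (u v : E) :
    ⟪perp w u, perp w v⟫ = ⟪u, v⟫ - ⟪w, u⟫ * ⟪w, v⟫ := by
  simp only [perp_apply hw, inner_sub_left, inner_sub_right, real_inner_smul_left,
    real_inner_smul_right, real_inner_self_eq_norm_sq, hw, real_inner_comm w]
  ring

lemma norm_perp_sq (hw : ‖w‖ = 1) (v : E) : ‖perp w v‖ ^ 2 = ‖v‖ ^ 2 - ⟪w, v⟫ ^ 2 := by
  rw [← real_inner_self_eq_norm_sq, inner_perp_perp hw, real_inner_self_eq_norm_sq, sq ⟪w, v⟫]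

end Perp

section MarginObj

open scoped RealInnerProductSpace

variable {E : Type*} [NormedAddCommGroup E] [InnerProductSpace ℝ E] {r : ℝ} {F : ℝ → ℝ → ℝ}

/-- The objective `v ↦ r·F(⟨w,v⟩, ‖Π_{w⊥}v‖) + ⟨h, Π_{w⊥}v⟩`. The optimization defining
`ξ⁽²⁾_{n,ψ,κ}` is the case `r = ψ^{−1/2}`, `F = F_κ`, `h = p^{−1/2}·g`, `v = Λ_n^{1/2}θ`. -/
def marginObj (r : ℝ) (F : ℝ → ℝ → ℝ) (w h v : E) : ℝ :=
  r * F ⟪w, v⟫ ‖perp w v‖ + ⟪h, perp w v⟫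

lemma continuous_marginObj (hF : Continuous fun c : ℝ × ℝ => F c.1 c.2) (w h : E) :
    Continuous (marginObj r F w h) := by
  have hF' : Continuous fun v : E => F ⟪w, v⟫ ‖perp w v‖ :=
    hF.comp (f := fun v : E => (⟪w, v⟫, ‖perp w v‖)) (by fun_prop)
  exact (hF'.const_mul r).add (by fun_prop)

lemma convexOn_marginObj (hr : 0 ≤ r) (hF : ConvexOn ℝ univ fun c : ℝ × ℝ => F c.1 c.2)
    (hmono : ∀ a, MonotoneOn (F a) (Ici 0)) (w h : E) : ConvexOn ℝ univ (marginObj r F w h) := by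
  have hF' : ConvexOn ℝ univ fun v : E => F ⟪w, v⟫ ‖perp w v‖ := by
    refine ⟨convex_univ, fun u _ v _ a b ha hb hab => ?_⟩
    have hnorm : ‖perp w (a • u + b • v)‖ ≤ a * ‖perp w u‖ + b * ‖perp w v‖ := by
      rw [map_add, map_smul, map_smul]
      refine (norm_add_le _ _).trans_eq ?_
      rw [norm_smul, norm_smul, norm_of_nonneg ha, norm_of_nonneg hb]
    calc F ⟪w, a • u + b • v⟫ ‖perp w (a • u + b • v)‖
        ≤ F (a * ⟪w, u⟫ + b * ⟪w, v⟫) (a * ‖perp w u‖ + b * ‖perp w v‖) := by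
          rw [inner_add_right, inner_smul_right, inner_smul_right]
          exact hmono _ (norm_nonneg _) ((norm_nonneg _).trans hnorm) hnorm
      _ ≤ _ := hF.2 (mem_univ (⟪w, u⟫, ‖perp w u‖)) (mem_univ (⟪w, v⟫, ‖perp w v‖)) ha hb hab
  exact (hF'.smul hr).add ((innerSL ℝ h ∘L perp w).toLinearMap.convexOn convex_univ)

lemma le_marginObj (w h v : E) :
    r * F ⟪w, v⟫ ‖perp w v‖ - ‖h‖ * ‖perp w v‖ ≤ marginObj r F w h v := by
  have := abs_le.1 (abs_real_inner_le_norm h (perp w v))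
  unfold marginObj
  linarith [this.1]

end MarginObj

/-- The segment between two minimizers consists of minimizers and, `s` being strictly convex, runs
through the interior of `s`, where a minimum is global. -/
lemma eq_of_isMinOn_of_lt {E : Type*} [AddCommGroup E] [Module ℝ E] [TopologicalSpace E]
    [IsTopologicalAddGroup E] [ContinuousSMul ℝ E] {s : Set E} {φ : E → ℝ} (hs : StrictConvex ℝ s)
    (hφ : ConvexOn ℝ univ φ) {x y z : E} (hx : x ∈ s) (hy : y ∈ s) (hxmin : IsMinOn φ s x)
    (hymin : IsMinOn φ s y) (hz : φ z < φ x) : x = y := by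
  by_contra hxy
  have hmid := hs hx hy hxy one_half_pos one_half_pos (add_halves 1)
  set m := (1 / 2 : ℝ) • x + (1 / 2 : ℝ) • y
  have hle : φ m ≤ φ x := by
    have hconv := hφ.2 (mem_univ x) (mem_univ y) one_half_pos.le one_half_pos.le (add_halves 1)
    have hyx : φ y ≤ φ x := hymin hx
    simp only [smul_eq_mul] at hconv
    linarith
  have hloc : IsLocalMin φ m := by
    filter_upwards [mem_interior_iff_mem_nhds.1 hmid] with u hu using hle.trans (hxmin hu)
  have hglob : φ m ≤ φ z := IsMinOn.of_isLocalMin_of_convex_univ hloc hφ z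
  exact (hglob.trans_lt hz).not_ge (hxmin (interior_subset hmid))

section IsAsympStationary

open scoped RealInnerProductSpace

variable {E : ℕ → Type*} [∀ n, NormedAddCommGroup (E n)] [∀ n, InnerProductSpace ℝ (E n)]
  {r c₁ c₂ d₁ d₂ s C : ℝ} {F : ℝ → ℝ → ℝ} {S : ∀ n, E n →L[ℝ] E n} {w h θ : ∀ n, E n}

/-- `θ n` is a stationary point of `r·F(⟨w,Sθ⟩, ‖Π_{w⊥}Sθ‖) + ⟨h,Sθ⟩ + (s/2)·‖θ‖²` once the overlaps
at which `F` and its partial derivatives `d₁`, `d₂` are evaluated are frozen at `c₁`, `c₂`, and the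
overlaps of `θ n` do converge to `c₁`, `c₂` while `‖θ n‖` tends to `1`. The multiplier of the
constraint `‖θ‖ ≤ 1` is `s`. -/
structure IsAsympStationary (r c₁ c₂ d₁ d₂ s C : ℝ) (S : ∀ n, E n →L[ℝ] E n) (w h θ : ∀ n, E n) :
    Prop where
  nonneg : 0 ≤ r
  snd_pos : 0 < c₂
  deriv_snd_nonneg : 0 ≤ d₂
  multiplier_pos : 0 < s
  norm_eq_one : ∀ n, ‖w n‖ = 1
  norm_le : ∀ n, ‖S n‖ ≤ C
  stationary : ∀ n x, ⟪h n, S n x⟫ = -(r * (d₁ - c₁ * c₂⁻¹ * d₂)) * ⟪w n, S n x⟫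
    - r * (c₂⁻¹ * d₂) * ⟪S n (θ n), S n x⟫ - s * ⟪θ n, x⟫
  tendsto_inner : Tendsto (fun n => ⟪w n, S n (θ n)⟫) atTop (𝓝 c₁)
  tendsto_norm_map : Tendsto (fun n => ‖S n (θ n)‖ ^ 2) atTop (𝓝 (c₁ ^ 2 + c₂ ^ 2))
  tendsto_norm : Tendsto (fun n => ‖θ n‖) atTop (𝓝 1)
  tendsto_inner_noise : Tendsto (fun n => ⟪h n, w n⟫) atTop (𝓝 0)

namespace IsAsympStationary

lemma norm_map_le (hθ : IsAsympStationary r c₁ c₂ d₁ d₂ s C S w h θ) {n : ℕ} (x : E n) :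
    ‖S n x‖ ≤ C * ‖x‖ :=
  (S n).le_of_opNorm_le (hθ.norm_le n) x

lemma abs_inner_map_le (hθ : IsAsympStationary r c₁ c₂ d₁ d₂ s C S w h θ) {n : ℕ} (x : E n) :
    |⟪w n, S n x⟫| ≤ C * ‖x‖ := by
  simpa [hθ.norm_eq_one n] using
    (abs_real_inner_le_norm (w n) (S n x)).trans
      (mul_le_mul_of_nonneg_left (hθ.norm_map_le x) (norm_nonneg _))

lemma tendsto_norm_perp (hθ : IsAsympStationary r c₁ c₂ d₁ d₂ s C S w h θ) :
    Tendsto (fun n => ‖perp (w n) (S n (θ n))‖) atTop (𝓝 c₂) := by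
  have hsq : Tendsto (fun n => √(‖perp (w n) (S n (θ n))‖ ^ 2)) atTop (𝓝 √(c₂ ^ 2)) := by
    refine Tendsto.sqrt ?_
    simp only [norm_perp_sq (hθ.norm_eq_one _)]
    simpa using hθ.tendsto_norm_map.sub (hθ.tendsto_inner.pow 2)
  simpa only [sqrt_sq (norm_nonneg _), sqrt_sq hθ.snd_pos.le] using hsq

lemma tendsto_inner_perp (hθ : IsAsympStationary r c₁ c₂ d₁ d₂ s C S w h θ) :
    Tendsto (fun n => ⟪h n, perp (w n) (S n (θ n))⟫) atTop
      (𝓝 (-(r * (c₁ * d₁ + c₂ * d₂) + s))) := by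
  have hlim := (((hθ.tendsto_inner.const_mul (-(r * (d₁ - c₁ * c₂⁻¹ * d₂)))).sub
    (hθ.tendsto_norm_map.const_mul (r * (c₂⁻¹ * d₂)))).sub
    ((hθ.tendsto_norm.pow 2).const_mul s)).sub (hθ.tendsto_inner_noise.mul hθ.tendsto_inner)
  convert hlim using 2
  · rw [inner_perp_right (hθ.norm_eq_one _), hθ.stationary, real_inner_self_eq_norm_sq,
      real_inner_self_eq_norm_sq]
  · have := hθ.snd_pos.ne'
    field_simp
    ring

lemma tendsto_marginObj_smul (hθ : IsAsympStationary r c₁ c₂ d₁ d₂ s C S w h θ)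
    (hF : Continuous fun c : ℝ × ℝ => F c.1 c.2) {t : ℕ → ℝ} {a : ℝ} (ht0 : ∀ n, 0 ≤ t n)
    (ht : Tendsto t atTop (𝓝 a)) :
    Tendsto (fun n => marginObj r F (w n) (h n) (S n (t n • θ n))) atTop
      (𝓝 (r * F (a * c₁) (a * c₂) - a * (r * (c₁ * d₁ + c₂ * d₂) + s))) := by
  have hFlim := (hF.tendsto (a * c₁, a * c₂)).comp
    ((ht.mul hθ.tendsto_inner).prodMk_nhds (ht.mul hθ.tendsto_norm_perp))
  refine Tendsto.congr (fun n => ?_)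
    ((hFlim.const_mul r).add (ht.mul hθ.tendsto_inner_perp) |>.trans_eq ?_)
  · simp only [marginObj, map_smul, inner_smul_right, norm_smul, norm_of_nonneg (ht0 n),
      Function.comp_apply]
  · ring_nf

lemma inner_map_le (hθ : IsAsympStationary r c₁ c₂ d₁ d₂ s C S w h θ) {n : ℕ} {x : E n}
    (hx : ‖x‖ ≤ 1) :
    ⟪S n (θ n), S n x⟫ ≤ c₂ * ‖perp (w n) (S n x)‖ + c₁ * ⟪w n, S n x⟫
      + C * (|‖perp (w n) (S n (θ n))‖ - c₂| + |⟪w n, S n (θ n)⟫ - c₁|) := by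
  set N := ‖perp (w n) (S n (θ n))‖
  set b := ‖perp (w n) (S n x)‖
  set u := ⟪w n, S n x⟫
  have hC : 0 ≤ C := (norm_nonneg _).trans (hθ.norm_le n)
  have hb : b ≤ C := (norm_perp_apply_le _ _).trans
    ((hθ.norm_map_le x).trans (mul_le_of_le_one_right hC hx))
  have hu : |u| ≤ C := (hθ.abs_inner_map_le x).trans (mul_le_of_le_one_right hC hx)
  have hperp : ⟪S n (θ n), S n x⟫ - ⟪w n, S n (θ n)⟫ * u ≤ N * b :=
    (inner_perp_perp (hθ.norm_eq_one n) _ _).symm.trans_le (real_inner_le_norm _ _)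
  have hNb : (N - c₂) * b ≤ |N - c₂| * C :=
    mul_le_mul (le_abs_self _) hb (norm_nonneg _) (abs_nonneg _)
  have hIu : (⟪w n, S n (θ n)⟫ - c₁) * u ≤ |⟪w n, S n (θ n)⟫ - c₁| * C :=
    (le_abs_self _).trans ((abs_mul _ _).trans_le (mul_le_mul_of_nonneg_left hu (abs_nonneg _)))
  linarith

/-- By stationarity the linear terms of the subgradient bound at `(c₁, c₂)` add up to
`r·d₂·(‖Π_{w⊥}Sx‖ - ⟨Π_{w⊥}Sθ, Π_{w⊥}Sx⟩/c₂)`, nonnegative up to `o(1)` by Cauchy–Schwarz, and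
`-s·⟨θ,x⟩`, which on the unit ball is at least `(s/2)·‖x - θ‖² - s` up to `o(1)`. -/
lemma le_marginObj (hθ : IsAsympStationary r c₁ c₂ d₁ d₂ s C S w h θ)
    (hF : ∀ a b, F c₁ c₂ + d₁ * (a - c₁) + d₂ * (b - c₂) ≤ F a b) {n : ℕ} {x : E n}
    (hx : ‖x‖ ≤ 1) :
    r * (F c₁ c₂ - c₁ * d₁ - c₂ * d₂) - s + s / 2 * ‖x - θ n‖ ^ 2
      - (r * (c₂⁻¹ * d₂) * (C * (|‖perp (w n) (S n (θ n))‖ - c₂| + |⟪w n, S n (θ n)⟫ - c₁|))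
        + s / 2 * (‖θ n‖ ^ 2 - 1) + |⟪h n, w n⟫| * C) ≤
      marginObj r F (w n) (h n) (S n x) := by
  have hC : 0 ≤ C := (norm_nonneg _).trans (hθ.norm_le n)
  have hgrad := mul_le_mul_of_nonneg_left (hF ⟪w n, S n x⟫ ‖perp (w n) (S n x)‖) hθ.nonneg
  have hcross := mul_le_mul_of_nonneg_left (hθ.inner_map_le hx) <|
    mul_nonneg hθ.nonneg (mul_nonneg (inv_pos.2 hθ.snd_pos).le hθ.deriv_snd_nonneg)
  have hc₂ : c₂⁻¹ * d₂ * c₂ = d₂ := by rw [mul_right_comm, inv_mul_cancel₀ hθ.snd_pos.ne', one_mul]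
  have hnoise : ⟪h n, w n⟫ * ⟪w n, S n x⟫ ≤ |⟪h n, w n⟫| * C :=
    (le_abs_self _).trans <| (abs_mul _ _).trans_le <| mul_le_mul_of_nonneg_left
      ((hθ.abs_inner_map_le x).trans (mul_le_of_le_one_right hC hx)) (abs_nonneg _)
  have hpolar : s * ⟪θ n, x⟫ ≤ s / 2 * (1 + ‖θ n‖ ^ 2 - ‖x - θ n‖ ^ 2) := by
    have hx1 : ‖x‖ ^ 2 ≤ 1 := pow_le_one₀ (norm_nonneg x) hx
    rw [norm_sub_sq_real, real_inner_comm, div_mul_comm]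
    nlinarith [hθ.multiplier_pos]
  rw [marginObj, inner_perp_right (hθ.norm_eq_one n), hθ.stationary]
  linear_combination hgrad + hcross + hnoise + hpolar + r * ‖perp (w n) (S n x)‖ * hc₂

lemma exists_tendsto_zero_le_marginObj (hθ : IsAsympStationary r c₁ c₂ d₁ d₂ s C S w h θ)
    (hF : ∀ a b, F c₁ c₂ + d₁ * (a - c₁) + d₂ * (b - c₂) ≤ F a b) :
    ∃ ε : ℕ → ℝ, Tendsto ε atTop (𝓝 0) ∧ ∀ n (x : E n), ‖x‖ ≤ 1 →
      r * (F c₁ c₂ - c₁ * d₁ - c₂ * d₂) - s + s / 2 * ‖x - θ n‖ ^ 2 - ε n ≤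
        marginObj r F (w n) (h n) (S n x) := by
  refine ⟨_, ?_, fun n x hx => hθ.le_marginObj hF hx⟩
  have hperp := (hθ.tendsto_norm_perp.sub_const c₂).abs
  have hinner := (hθ.tendsto_inner.sub_const c₁).abs
  have hlim := ((((hperp.add hinner).const_mul C).const_mul (r * (c₂⁻¹ * d₂))).add
    (((hθ.tendsto_norm.pow 2).sub_const 1).const_mul (s / 2))).add
    (hθ.tendsto_inner_noise.abs.mul_const C)
  simpa using hlim

lemma tendsto_sInf_marginObj (hθ : IsAsympStationary r c₁ c₂ d₁ d₂ s C S w h θ)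
    (hFc : Continuous fun c : ℝ × ℝ => F c.1 c.2)
    (hF : ∀ a b, F c₁ c₂ + d₁ * (a - c₁) + d₂ * (b - c₂) ≤ F a b) :
    Tendsto (fun n => sInf ((marginObj r F (w n) (h n) ∘ S n) '' Metric.closedBall 0 1)) atTop
      (𝓝 (r * (F c₁ c₂ - c₁ * d₁ - c₂ * d₂) - s)) := by
  obtain ⟨ε, hε, hle⟩ := hθ.exists_tendsto_zero_le_marginObj hF
  have hlower (n : ℕ) : r * (F c₁ c₂ - c₁ * d₁ - c₂ * d₂) - s - ε n ∈ lowerBounds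
      ((marginObj r F (w n) (h n) ∘ S n) '' Metric.closedBall 0 1) := by
    rintro _ ⟨x, hx, rfl⟩
    have hquad := mul_nonneg (half_pos hθ.multiplier_pos).le (sq_nonneg ‖x - θ n‖)
    exact (hle n x (mem_closedBall_zero_iff.1 hx)).trans' (by linarith)
  have hmax (n : ℕ) : 0 < max 1 ‖θ n‖ := zero_lt_one.trans_le (le_max_left ..)
  have hscale : Tendsto (fun n => (max 1 ‖θ n‖)⁻¹) atTop (𝓝 1) := by
    have hlim := (tendsto_const_nhds (x := (1 : ℝ))).max hθ.tendsto_norm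
    rw [max_self] at hlim
    simpa only [inv_one] using hlim.inv₀ one_ne_zero
  have hball (n : ℕ) : (max 1 ‖θ n‖)⁻¹ • θ n ∈ Metric.closedBall (0 : E n) 1 := by
    rw [mem_closedBall_zero_iff, norm_smul, norm_of_nonneg (inv_nonneg.2 (hmax n).le),
      inv_mul_le_one₀ (hmax n)]
    exact le_max_right ..
  refine tendsto_of_tendsto_of_tendsto_of_le_of_le (by simpa using hε.const_sub _)
    (hθ.tendsto_marginObj_smul hFc (fun n => (inv_nonneg.2 (hmax n).le)) hscale |>.trans_eq ?_)
    (fun n => le_csInf ((Metric.nonempty_closedBall.2 zero_le_one).image _) (hlower n))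
    (fun n => csInf_le ⟨_, hlower n⟩ (mem_image_of_mem _ (hball n)))
  ring_nf

lemma tendsto_norm_sub_of_isMinOn (hθ : IsAsympStationary r c₁ c₂ d₁ d₂ s C S w h θ)
    (hFc : Continuous fun c : ℝ × ℝ => F c.1 c.2)
    (hF : ∀ a b, F c₁ c₂ + d₁ * (a - c₁) + d₂ * (b - c₂) ≤ F a b) {x : ∀ n, E n}
    (hx : ∀ n, x n ∈ Metric.closedBall 0 1)
    (hmin : ∀ n, IsMinOn (marginObj r F (w n) (h n) ∘ S n) (Metric.closedBall 0 1) (x n)) :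
    Tendsto (fun n => ‖x n - θ n‖) atTop (𝓝 0) := by
  obtain ⟨ε, hε, hle⟩ := hθ.exists_tendsto_zero_le_marginObj hF
  have hval (n : ℕ) : marginObj r F (w n) (h n) (S n (x n)) =
      sInf ((marginObj r F (w n) (h n) ∘ S n) '' Metric.closedBall 0 1) :=
    (IsLeast.csInf_eq (a := (marginObj r F (w n) (h n) ∘ S n) (x n))
      ⟨mem_image_of_mem _ (hx n), forall_mem_image.2 fun _ hy => hmin n hy⟩).symm
  have hbound (n : ℕ) : ‖x n - θ n‖ ^ 2 ≤
      2 / s * (sInf ((marginObj r F (w n) (h n) ∘ S n) '' Metric.closedBall 0 1)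
        - (r * (F c₁ c₂ - c₁ * d₁ - c₂ * d₂) - s) + ε n) := by
    rw [← hval, div_mul_eq_mul_div, le_div_iff₀ hθ.multiplier_pos]
    linarith [hle n (x n) (mem_closedBall_zero_iff.1 (hx n))]
  have hzero := (((hθ.tendsto_sInf_marginObj hFc hF).sub_const
    (r * (F c₁ c₂ - c₁ * d₁ - c₂ * d₂) - s)).add hε).const_mul (2 / s)
  rw [sub_self, add_zero, mul_zero] at hzero
  have hsq := (squeeze_zero (fun n => sq_nonneg _) hbound hzero).sqrt
  simpa only [sqrt_sq (norm_nonneg _), sqrt_zero] using hsq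

lemma tendsto_inner_of_tendsto_norm_sub (hθ : IsAsympStationary r c₁ c₂ d₁ d₂ s C S w h θ)
    {x : ∀ n, E n} (hx : Tendsto (fun n => ‖x n - θ n‖) atTop (𝓝 0)) :
    Tendsto (fun n => ⟪w n, S n (x n)⟫) atTop (𝓝 c₁) := by
  have hzero : Tendsto (fun n => ⟪w n, S n (x n - θ n)⟫) atTop (𝓝 0) :=
    squeeze_zero_norm (fun n => hθ.abs_inner_map_le _) (by simpa using hx.const_mul C)
  simpa only [← inner_add_right, ← map_add, sub_add_cancel, zero_add] using
    hzero.add hθ.tendsto_inner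

lemma tendsto_norm_of_tendsto_norm_sub (hθ : IsAsympStationary r c₁ c₂ d₁ d₂ s C S w h θ)
    {x : ∀ n, E n} (hx : Tendsto (fun n => ‖x n - θ n‖) atTop (𝓝 0)) :
    Tendsto (fun n => ‖S n (x n)‖) atTop (𝓝 √(c₁ ^ 2 + c₂ ^ 2)) := by
  have hle (n : ℕ) : ‖‖S n (x n)‖ - ‖S n (θ n)‖‖ ≤ C * ‖x n - θ n‖ :=
    calc _ ≤ ‖S n (x n - θ n)‖ := (abs_norm_sub_norm_le _ _).trans_eq (by rw [map_sub])
      _ ≤ _ := hθ.norm_map_le _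
  have hzero := squeeze_zero_norm hle (by simpa using hx.const_mul C)
  have hnorm := hθ.tendsto_norm_map.sqrt
  simp only [sqrt_sq (norm_nonneg _)] at hnorm
  simpa using hzero.add hnorm

/-- Moving from `θ n` to `t • θ n` with `t > 1` changes the limiting objective at the rate `-s < 0`,
so for `t` close to `1` some point outside the unit ball beats every point inside it. -/
lemma eventually_exists_lt_sInf (hθ : IsAsympStationary r c₁ c₂ d₁ d₂ s C S w h θ)
    (hFc : Continuous fun c : ℝ × ℝ => F c.1 c.2)
    (hF : ∀ a b, F c₁ c₂ + d₁ * (a - c₁) + d₂ * (b - c₂) ≤ F a b)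
    (hF' : HasDerivAt (fun t => F (t * c₁) (t * c₂)) (c₁ * d₁ + c₂ * d₂) 1) :
    ∀ᶠ n in atTop, ∃ z, marginObj r F (w n) (h n) (S n z) <
      sInf ((marginObj r F (w n) (h n) ∘ S n) '' Metric.closedBall 0 1) := by
  have hderiv := (hF'.const_mul r).sub
    ((hasDerivAt_id 1).mul_const (r * (c₁ * d₁ + c₂ * d₂) + s))
  have hneg : r * (c₁ * d₁ + c₂ * d₂) - 1 * (r * (c₁ * d₁ + c₂ * d₂) + s) < 0 := by
    linarith [hθ.multiplier_pos]
  obtain ⟨t, ht, ht1⟩ := (((hasDerivAt_iff_tendsto_slope.1 hderiv).eventually_lt_const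
    hneg).filter_mono (nhdsGT_le_nhdsNE 1)).and self_mem_nhdsWithin |>.exists
  have hlt := (slope_neg_iff_of_le (mem_Ioi.1 ht1).le).1 ht
  have ht0 : 0 ≤ t := zero_le_one.trans (mem_Ioi.1 ht1).le
  have hlim := (hθ.tendsto_marginObj_smul hFc (fun _ => ht0) (tendsto_const_nhds (x := t)))
  filter_upwards [hlim.eventually_lt (hθ.tendsto_sInf_marginObj hFc hF)
    (hlt.trans_eq (by simp; ring))] with n hn using ⟨_, hn⟩

lemma eventually_existsUnique_isMinOn [∀ n, FiniteDimensional ℝ (E n)]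
    (hθ : IsAsympStationary r c₁ c₂ d₁ d₂ s C S w h θ)
    (hFc : Continuous fun c : ℝ × ℝ => F c.1 c.2)
    (hF : ∀ a b, F c₁ c₂ + d₁ * (a - c₁) + d₂ * (b - c₂) ≤ F a b)
    (hF' : HasDerivAt (fun t => F (t * c₁) (t * c₂)) (c₁ * d₁ + c₂ * d₂) 1)
    (hconv : ConvexOn ℝ univ fun c : ℝ × ℝ => F c.1 c.2)
    (hmono : ∀ a, MonotoneOn (F a) (Ici 0)) :
    ∀ᶠ n in atTop, ∃! x, x ∈ Metric.closedBall 0 1 ∧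
      IsMinOn (marginObj r F (w n) (h n) ∘ S n) (Metric.closedBall 0 1) x := by
  filter_upwards [hθ.eventually_exists_lt_sInf hFc hF hF'] with n ⟨z, hz⟩
  have hcont : Continuous (marginObj r F (w n) (h n) ∘ S n) :=
    (continuous_marginObj hFc _ _).comp (S n).continuous
  obtain ⟨x, hx, hmin⟩ := (isCompact_closedBall (0 : E n) 1).exists_isMinOn
    (Metric.nonempty_closedBall.2 zero_le_one) hcont.continuousOn
  have hzx : marginObj r F (w n) (h n) (S n z) < marginObj r F (w n) (h n) (S n x) :=
    hz.trans_le (csInf_le ⟨_, forall_mem_image.2 fun _ hy => hmin hy⟩ (mem_image_of_mem _ hx))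
  refine ⟨x, ⟨hx, hmin⟩, fun y hy => (eq_of_isMinOn_of_lt (strictConvex_closedBall ℝ 0 1) ?_
    hx hy.1 hmin hy.2 hzx).symm⟩
  exact (convexOn_marginObj hθ.nonneg hconv hmono (w n) (h n)).comp_linearMap (S n).toLinearMap

end IsAsympStationary

end IsAsympStationary

section EuclideanSpace

open scoped RealInnerProductSpace

variable {ι : Type*} [Fintype ι]

lemma l2_eq_norm (v : ι → ℝ) : l2 v = ‖WithLp.toLp 2 v‖ := by
  simp [l2, EuclideanSpace.norm_eq]

lemma inner_toLp (u v : ι → ℝ) : ⟪WithLp.toLp 2 u, WithLp.toLp 2 v⟫ = ∑ i, u i * v i := by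
  simp [PiLp.inner_apply, mul_comm]

lemma toLp_projv {w : ι → ℝ} (hw : l2 w = 1) (v : ι → ℝ) :
    WithLp.toLp 2 (projv w v) = perp (WithLp.toLp 2 w) (WithLp.toLp 2 v) := by
  rw [perp_apply ((l2_eq_norm w).symm.trans hw), inner_toLp]
  rfl

variable [DecidableEq ι]

/-- The diagonal operator with entries `a`. -/
def diagCLM (a : ι → ℝ) : EuclideanSpace ℝ ι →L[ℝ] EuclideanSpace ℝ ι :=
  Matrix.toEuclideanCLM (𝕜 := ℝ) (Matrix.diagonal a)

lemma diagCLM_toLp (a v : ι → ℝ) :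
    diagCLM a (WithLp.toLp 2 v) = WithLp.toLp 2 fun i => a i * v i := by
  ext i
  simp [diagCLM, Matrix.mulVec_diagonal]

open scoped Matrix.Norms.L2Operator in
lemma norm_diagCLM_le {a : ι → ℝ} {C : ℝ} (hC : 0 ≤ C) (ha : ∀ i, |a i| ≤ C) :
    ‖diagCLM a‖ ≤ C := by
  rw [diagCLM, Matrix.l2_opNorm_toEuclideanCLM, Matrix.l2_opNorm_diagonal]
  exact (pi_norm_le_iff_of_nonneg hC).2 ha

end EuclideanSpace

section Objective

variable {p : ℕ} {ψ κ : ℝ} {f : ℝ → ℝ} {w : Fin p → ℝ}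

/-- The vector `p^{−1/2}·g`. -/
def scaledNoise (g : Fin p → ℝ) : EuclideanSpace ℝ (Fin p) := WithLp.toLp 2 fun i => (√p)⁻¹ * g i

/-- The operator `Λ^{1/2}`, for `Λ` the diagonal matrix with the given entries. -/
def sqrtCLM (Λ : Fin p → ℝ) : EuclideanSpace ℝ (Fin p) →L[ℝ] EuclideanSpace ℝ (Fin p) :=
  diagCLM fun i => √(Λ i)

lemma obj2_eq_marginObj (hw : l2 w = 1) (Λ g θ : Fin p → ℝ) :
    obj2 p ψ κ f Λ w g θ =
      marginObj (√ψ)⁻¹ (Fk f κ) (WithLp.toLp 2 w) (scaledNoise g)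
        (sqrtCLM Λ (WithLp.toLp 2 θ)) := by
  rw [marginObj, sqrtCLM, diagCLM_toLp, ← toLp_projv hw, inner_toLp, scaledNoise, inner_toLp,
    ← l2_eq_norm, obj2, Finset.mul_sum]
  simp only [mul_assoc, mul_left_comm (w _)]

lemma image_obj2 (hw : l2 w = 1) (Λ g : Fin p → ℝ) :
    obj2 p ψ κ f Λ w g '' {θ | l2 θ ≤ 1} =
      (marginObj (√ψ)⁻¹ (Fk f κ) (WithLp.toLp 2 w) (scaledNoise g) ∘ sqrtCLM Λ) ''
        Metric.closedBall 0 1 := by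
  ext y
  simp only [mem_image, mem_ofPred_eq, Function.comp_apply, mem_closedBall_zero_iff,
    obj2_eq_marginObj hw, l2_eq_norm]
  exact (WithLp.equiv 2 (Fin p → ℝ)).symm.exists_congr_left.trans (by simp)

lemma isMinOn_obj2_iff (hw : l2 w = 1) (Λ g θ : Fin p → ℝ) :
    (l2 θ ≤ 1 ∧ ∀ θ', l2 θ' ≤ 1 → obj2 p ψ κ f Λ w g θ ≤ obj2 p ψ κ f Λ w g θ') ↔
      WithLp.toLp 2 θ ∈ Metric.closedBall 0 1 ∧
        IsMinOn (marginObj (√ψ)⁻¹ (Fk f κ) (WithLp.toLp 2 w) (scaledNoise g) ∘ sqrtCLM Λ)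
          (Metric.closedBall 0 1) (WithLp.toLp 2 θ) := by
  simp only [isMinOn_iff, obj2_eq_marginObj hw, l2_eq_norm, Function.comp_apply,
    mem_closedBall_zero_iff]
  refine and_congr_right fun _ => ?_
  exact (WithLp.equiv 2 (Fin p → ℝ)).symm.forall_congr_left.trans (by simp)

end Objective

section StationaryPoint

open scoped RealInnerProductSpace

/-- The denominator `D = B·X^{1/2} + ψ^{1/2}·s·X^{−1/2}` of the system of equations, where `B` is
`c₂⁻¹·∂₂F_κ(c₁,c₂)`. -/
def sysDenom (ψ s B x : ℝ) : ℝ := B * √x + √ψ * s * (√x)⁻¹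

/-- The vector `-(ψ^{1/2}·p^{−1/2}·g + A·w)/D(Λ)`, which solves the stationarity equation of
`IsAsympStationary` when `A = ∂₁F_κ - c₁·B` and `B = c₂⁻¹·∂₂F_κ`. -/
def statPoint {p : ℕ} (ψ s A B : ℝ) (Λ w g : Fin p → ℝ) : EuclideanSpace ℝ (Fin p) :=
  WithLp.toLp 2 fun i => -√ψ / sysDenom ψ s B (Λ i) * ((√p)⁻¹ * g i)
    + -A / sysDenom ψ s B (Λ i) * w i

variable {ψ s A B : ℝ}

lemma sysDenom_pos (hψ : 0 < ψ) (hs : 0 < s) (hB : 0 ≤ B) {x : ℝ} (hx : 0 < x) :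
    0 < sysDenom ψ s B x := by
  unfold sysDenom
  positivity

lemma continuousOn_div_sysDenom (hψ : 0 < ψ) (hs : 0 < s) (hB : 0 ≤ B) (c : ℝ) :
    ContinuousOn (fun x => c / sysDenom ψ s B x) (Ioi 0) := by
  refine continuousOn_const.div ?_ fun x hx => (sysDenom_pos hψ hs hB hx).ne'
  exact (continuousOn_const.mul continuous_sqrt.continuousOn).add <| continuousOn_const.mul <|
    continuous_sqrt.continuousOn.inv₀ fun _ hx => (sqrt_pos.2 hx).ne'

lemma sysDenom_mul_sqrt {x : ℝ} (hx : 0 < x) : sysDenom ψ s B x * √x = B * √x ^ 2 + √ψ * s := by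
  rw [sysDenom, add_mul, inv_mul_cancel_right₀ (sqrt_pos.2 hx).ne']
  ring

lemma inner_scaledNoise_sqrtCLM {p : ℕ} (hψ : 0 < ψ) (hs : 0 < s) (hB : 0 ≤ B)
    {Λ : Fin p → ℝ} (hΛ : ∀ i, 0 < Λ i) (w g : Fin p → ℝ) (x : EuclideanSpace ℝ (Fin p)) :
    ⟪scaledNoise g, sqrtCLM Λ x⟫ = -((√ψ)⁻¹ * A) * ⟪WithLp.toLp 2 w, sqrtCLM Λ x⟫
      - (√ψ)⁻¹ * B * ⟪sqrtCLM Λ (statPoint ψ s A B Λ w g), sqrtCLM Λ x⟫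
      - s * ⟪statPoint ψ s A B Λ w g, x⟫ := by
  obtain ⟨x, rfl⟩ := (WithLp.equiv 2 (Fin p → ℝ)).symm.surjective x
  simp only [WithLp.equiv_symm_apply, scaledNoise, sqrtCLM, statPoint, diagCLM_toLp, inner_toLp,
    Finset.mul_sum, ← Finset.sum_sub_distrib]
  refine Finset.sum_congr rfl fun i _ => ?_
  have hψ' := (sqrt_pos.2 hψ).ne'
  have hD := (sysDenom_pos hψ hs hB (hΛ i)).ne'
  field_simp
  linear_combination x i * (√ψ * (√p)⁻¹ * g i + A * w i) *
    sysDenom_mul_sqrt (ψ := ψ) (s := s) (B := B) (hΛ i)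

end StationaryPoint

namespace SpectralLimit

open scoped RealInnerProductSpace

variable {p : ℕ → ℕ} {xmin xmax : ℝ} {Λ w : (n : ℕ) → Fin (p n) → ℝ} {μ : Measure (ℝ × ℝ)}
  {Ω : Type*} [MeasurableSpace Ω] {P : Measure Ω} [IsProbabilityMeasure P]
  {g : (n : ℕ) → Ω → Fin (p n) → ℝ} {ψ κ c₁ c₂ s A B : ℝ} {f : ℝ → ℝ}

lemma Icc_subset_Ioi (h : SpectralLimit xmin xmax Λ w μ) : Icc xmin xmax ⊆ Ioi 0 :=
  fun _ hx => h.pos.trans_le hx.1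

lemma l2_eq_one (h : SpectralLimit xmin xmax Λ w μ) (n : ℕ) : l2 (w n) = 1 := by
  rw [l2, h.sum_sq, sqrt_one]

lemma norm_sqrtCLM_le (h : SpectralLimit xmin xmax Λ w μ) (n : ℕ) : ‖sqrtCLM (Λ n)‖ ≤ √xmax :=
  norm_diagCLM_le (sqrt_nonneg _) fun i =>
    (abs_of_nonneg (sqrt_nonneg _)).trans_le (sqrt_le_sqrt (h.mem_Icc n i).2)

lemma ae_tendsto_norm_statPoint_sq [IsFiniteMeasure μ] (h : SpectralLimit xmin xmax Λ w μ)
    (hp : Summable fun n => ((p n : ℝ) ^ 2)⁻¹) (hg : ∀ n, Measurable (g n))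
    (hlaw : ∀ n, P.map (g n) = stdGaussianPi (Fin (p n))) (hψ : 0 < ψ) (hs : 0 < s) (hB : 0 ≤ B) :
    ∀ᵐ ω ∂P, Tendsto (fun n => ‖statPoint ψ s A B (Λ n) (w n) (g n ω)‖ ^ 2) atTop
      (𝓝 (∫ q, (ψ + A ^ 2 * q.2 ^ 2) / sysDenom ψ s B q.1 ^ 2 ∂μ)) := by
  have hcont (c : ℝ) := (continuousOn_div_sysDenom hψ hs hB c).mono h.Icc_subset_Ioi
  filter_upwards [h.ae_tendsto_sum_mul_sq_add hp hg hlaw (continuousOn_const (c := 1)) (hcont (-√ψ))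
    (hcont (-A))] with ω hω
  convert hω using 2
  · rw [statPoint, EuclideanSpace.real_norm_sq_eq]
    simp only [one_mul]
  · refine congrArg _ (funext fun q => ?_)
    simp only [one_mul, div_pow, neg_sq, sq_sqrt hψ.le]
    ring

lemma ae_tendsto_norm_sqrtCLM_statPoint_sq [IsFiniteMeasure μ] (h : SpectralLimit xmin xmax Λ w μ)
    (hp : Summable fun n => ((p n : ℝ) ^ 2)⁻¹) (hg : ∀ n, Measurable (g n))
    (hlaw : ∀ n, P.map (g n) = stdGaussianPi (Fin (p n))) (hψ : 0 < ψ) (hs : 0 < s) (hB : 0 ≤ B) :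
    ∀ᵐ ω ∂P, Tendsto (fun n => ‖sqrtCLM (Λ n) (statPoint ψ s A B (Λ n) (w n) (g n ω))‖ ^ 2) atTop
      (𝓝 (∫ q, (ψ * q.1 + A ^ 2 * q.2 ^ 2 * q.1) / sysDenom ψ s B q.1 ^ 2 ∂μ)) := by
  have hcont (c : ℝ) := (continuousOn_div_sysDenom hψ hs hB c).mono h.Icc_subset_Ioi
  filter_upwards [h.ae_tendsto_sum_mul_sq_add hp hg hlaw continuousOn_id (hcont (-√ψ))
    (hcont (-A))] with ω hω
  convert hω using 2 with n
  · rw [statPoint, sqrtCLM, diagCLM_toLp, EuclideanSpace.real_norm_sq_eq]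
    simp only [mul_pow, sq_sqrt (h.pos.le.trans (h.mem_Icc n _).1), id]
  · refine congrArg _ (funext fun q => ?_)
    simp only [id, div_pow, neg_sq, sq_sqrt hψ.le]
    ring

lemma ae_tendsto_inner_statPoint (h : SpectralLimit xmin xmax Λ w μ)
    (hp : Summable fun n => ((p n : ℝ) ^ 2)⁻¹) (hg : ∀ n, Measurable (g n))
    (hlaw : ∀ n, P.map (g n) = stdGaussianPi (Fin (p n))) (hψ : 0 < ψ) (hs : 0 < s) (hB : 0 ≤ B) :
    ∀ᵐ ω ∂P, Tendsto (fun n => ⟪WithLp.toLp 2 (w n),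
        sqrtCLM (Λ n) (statPoint ψ s A B (Λ n) (w n) (g n ω))⟫) atTop
      (𝓝 (-∫ q, A * q.2 ^ 2 * √q.1 / sysDenom ψ s B q.1 ∂μ)) := by
  have hcont (c : ℝ) := (continuousOn_div_sysDenom hψ hs hB c).mono h.Icc_subset_Ioi
  filter_upwards [h.ae_tendsto_sum_mul_mul_add hp hg hlaw continuous_sqrt.continuousOn
    (hcont (-√ψ)) (hcont (-A))] with ω hω
  convert hω using 2
  · rw [statPoint, sqrtCLM, diagCLM_toLp, inner_toLp]
    exact Finset.sum_congr rfl fun i _ => by ring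
  · rw [← integral_neg]
    refine congrArg _ (funext fun q => ?_)
    ring

lemma ae_isAsympStationary [IsFiniteMeasure μ] (h : SpectralLimit xmin xmax Λ w μ)
    (hp : Summable fun n => ((p n : ℝ) ^ 2)⁻¹) (hg : ∀ n, Measurable (g n))
    (hlaw : ∀ n, P.map (g n) = stdGaussianPi (Fin (p n))) (hψ : 0 < ψ) (hc₂ : 0 < c₂)
    (hs : 0 < s) (hd₂ : 0 ≤ d2F f κ c₁ c₂) (hsys : SolSysMu f μ ψ κ c₁ c₂ s) :
    ∀ᵐ ω ∂P, IsAsympStationary (√ψ)⁻¹ c₁ c₂ (d1F f κ c₁ c₂) (d2F f κ c₁ c₂) s √xmax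
      (fun n => sqrtCLM (Λ n)) (fun n => WithLp.toLp 2 (w n)) (fun n => scaledNoise (g n ω))
      fun n => statPoint ψ s (d1F f κ c₁ c₂ - c₁ * c₂⁻¹ * d2F f κ c₁ c₂)
        (c₂⁻¹ * d2F f κ c₁ c₂) (Λ n) (w n) (g n ω) := by
  have hB : 0 ≤ c₂⁻¹ * d2F f κ c₁ c₂ := by positivity
  obtain ⟨hinner, hmap, hnorm⟩ := hsys
  filter_upwards [h.ae_tendsto_inner_statPoint hp hg hlaw hψ hs hB,
    h.ae_tendsto_norm_sqrtCLM_statPoint_sq hp hg hlaw hψ hs hB,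
    h.ae_tendsto_norm_statPoint_sq hp hg hlaw hψ hs hB,
    h.ae_tendsto_inv_sqrt_mul_sum_zero hp hg hlaw (continuousOn_const (c := 1))]
    with ω hω_inner hω_map hω_norm hω_noise
  have hω_one : Tendsto (fun n => √(‖statPoint ψ s _ _ (Λ n) (w n) (g n ω)‖ ^ 2)) atTop (𝓝 √1) :=
    hω_norm.sqrt.trans_eq (congrArg (fun a => 𝓝 √a) hnorm.symm)
  exact
    { nonneg := inv_nonneg.2 (sqrt_nonneg ψ)
      snd_pos := hc₂
      deriv_snd_nonneg := hd₂
      multiplier_pos := hs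
      norm_eq_one := fun n => (l2_eq_norm _).symm.trans (h.l2_eq_one n)
      norm_le := h.norm_sqrtCLM_le
      stationary := fun n => inner_scaledNoise_sqrtCLM hψ hs hB
        (fun i => h.Icc_subset_Ioi (h.mem_Icc n i)) (w n) (g n ω)
      tendsto_inner := hω_inner.trans_eq (congrArg 𝓝 (neg_eq_iff_eq_neg.1 hinner).symm)
      tendsto_norm_map := hω_map.trans_eq (congrArg 𝓝 hmap.symm)
      tendsto_norm := by simpa only [sqrt_sq (norm_nonneg _), sqrt_one] using hω_one
      tendsto_inner_noise := by
        refine hω_noise.congr fun n => ?_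
        rw [scaledNoise, inner_toLp, Finset.mul_sum]
        exact Finset.sum_congr rfl fun i _ => by ring }

end SpectralLimit

section Liminf

open scoped RealInnerProductSpace

lemma exists_pos_forall_le_of_forall_lt {r : ℝ} {F : ℝ → ℝ → ℝ}
    (hF : Continuous fun c : ℝ × ℝ => F c.1 c.2) (hpos : ∀ a b, 0 ≤ b → b < r * F a b) {R : ℝ}
    (hR : 0 ≤ R) : ∃ m, 0 < m ∧ ∀ a b, |a| ≤ R → 0 ≤ b → b ≤ R → m ≤ r * F a b - b := by
  have hcont : Continuous fun c : ℝ × ℝ => r * F c.1 c.2 - c.2 := by fun_prop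
  obtain ⟨c, hc, hmin⟩ := (isCompact_Icc.prod isCompact_Icc).exists_isMinOn
    (s := Icc (-R) R ×ˢ Icc 0 R) ⟨0, ⟨neg_nonpos.2 hR, hR⟩, le_rfl, hR⟩ hcont.continuousOn
  exact ⟨_, sub_pos.2 (hpos c.1 c.2 hc.2.1), fun a b ha hb hbR =>
    hmin (show (a, b) ∈ Icc (-R) R ×ˢ Icc 0 R from ⟨abs_le.1 ha, hb, hbR⟩)⟩

variable {E : ℕ → Type*} [∀ n, NormedAddCommGroup (E n)] [∀ n, InnerProductSpace ℝ (E n)]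
  {r C : ℝ} {F : ℝ → ℝ → ℝ} {S : ∀ n, E n →L[ℝ] E n} {w h : ∀ n, E n}

lemma exists_tendsto_pos_le_marginObj (hF : Continuous fun c : ℝ × ℝ => F c.1 c.2)
    (hpos : ∀ a b, 0 ≤ b → b < r * F a b) (hw : ∀ n, ‖w n‖ = 1) (hS : ∀ n, ‖S n‖ ≤ C)
    (hh : Tendsto (fun n => ‖h n‖) atTop (𝓝 1)) :
    ∃ (m : ℝ) (ε : ℕ → ℝ), 0 < m ∧ Tendsto ε atTop (𝓝 m) ∧
      ∀ n, ∀ x ∈ Metric.closedBall 0 1, ε n ≤ (marginObj r F (w n) (h n) ∘ S n) x := by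
  have hC : 0 ≤ C := (norm_nonneg _).trans (hS 0)
  obtain ⟨m, hm, hmF⟩ := exists_pos_forall_le_of_forall_lt hF hpos hC
  refine ⟨m, fun n => m - |‖h n‖ - 1| * C, hm,
    by simpa using ((hh.sub_const 1).abs.mul_const C).const_sub m, fun n x hx => ?_⟩
  have hSx : ‖S n x‖ ≤ C := ((S n).le_of_opNorm_le (hS n) x).trans
    (mul_le_of_le_one_right hC (mem_closedBall_zero_iff.1 hx))
  have hperp : ‖perp (w n) (S n x)‖ ≤ C := (norm_perp_apply_le _ _).trans hSx
  have hinner : |⟪w n, S n x⟫| ≤ C :=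
    (abs_real_inner_le_norm _ _).trans (by rwa [hw, one_mul])
  have hnoise : (‖h n‖ - 1) * ‖perp (w n) (S n x)‖ ≤ |‖h n‖ - 1| * C :=
    mul_le_mul (le_abs_self _) hperp (norm_nonneg _) (abs_nonneg _)
  refine (le_marginObj (w n) (h n) (S n x)).trans' ?_
  linarith [hmF _ _ hinner (norm_nonneg _) hperp]

lemma liminf_sInf_marginObj_pos (hF : Continuous fun c : ℝ × ℝ => F c.1 c.2)
    (hpos : ∀ a b, 0 ≤ b → b < r * F a b) (hw : ∀ n, ‖w n‖ = 1) (hS : ∀ n, ‖S n‖ ≤ C)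
    (hh : Tendsto (fun n => ‖h n‖) atTop (𝓝 1)) :
    0 < liminf (fun n => sInf ((marginObj r F (w n) (h n) ∘ S n) '' Metric.closedBall 0 1))
      atTop := by
  obtain ⟨m, ε, hm, hε, hle⟩ := exists_tendsto_pos_le_marginObj hF hpos hw hS hh
  have hzero (n : ℕ) : (0 : E n) ∈ Metric.closedBall (0 : E n) 1 :=
    Metric.mem_closedBall_self zero_le_one
  have hupper (n : ℕ) :
      sInf ((marginObj r F (w n) (h n) ∘ S n) '' Metric.closedBall 0 1) ≤ r * F 0 0 :=
    csInf_le ⟨ε n, forall_mem_image.2 (hle n)⟩ ⟨0, hzero n, by simp [marginObj]⟩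
  refine (half_pos hm).trans_le
    (le_liminf_of_le (isBoundedUnder_of ⟨_, hupper⟩).isCoboundedUnder_ge ?_)
  filter_upwards [hε.eventually_const_le (half_lt_self hm)] with n hn
  exact le_csInf ⟨_, mem_image_of_mem _ (hzero n)⟩
    (forall_mem_image.2 fun x hx => hn.trans (hle n x hx))

end Liminf

namespace SpectralLimit

variable {p : ℕ → ℕ} {xmin xmax : ℝ} {Λ w : (n : ℕ) → Fin (p n) → ℝ} {μ : Measure (ℝ × ℝ)}
  {Ω : Type*} [MeasurableSpace Ω] {P : Measure Ω} [IsProbabilityMeasure P]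
  {g : (n : ℕ) → Ω → Fin (p n) → ℝ} {ψ κ : ℝ} {f : ℝ → ℝ}

lemma ae_tendsto_norm_scaledNoise [IsProbabilityMeasure μ] (h : SpectralLimit xmin xmax Λ w μ)
    (hp : Summable fun n => ((p n : ℝ) ^ 2)⁻¹) (hg : ∀ n, Measurable (g n))
    (hlaw : ∀ n, P.map (g n) = stdGaussianPi (Fin (p n))) :
    ∀ᵐ ω ∂P, Tendsto (fun n => ‖scaledNoise (g n ω)‖) atTop (𝓝 1) := by
  filter_upwards [h.ae_tendsto_inv_mul_sum_mul_sq hp hg hlaw (continuousOn_const (c := 1))]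
    with ω hω
  rw [integral_const, probReal_univ, one_smul] at hω
  rw [← sqrt_one]
  refine hω.sqrt.congr fun n => ?_
  rw [scaledNoise, EuclideanSpace.norm_eq]
  simp only [norm_eq_abs, sq_abs, one_mul, mul_pow, inv_pow, sq_sqrt (Nat.cast_nonneg _),
    Finset.mul_sum]

lemma ae_liminf_sInf_obj2_pos [IsProbabilityMeasure μ] (h : SpectralLimit xmin xmax Λ w μ)
    (hf : IsLink f) (hκ : 0 < κ) (hψ : 0 < ψ) (hψf : ψ ≤ psiStar0 f)
    (hp : Summable fun n => ((p n : ℝ) ^ 2)⁻¹) (hg : ∀ n, Measurable (g n))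
    (hlaw : ∀ n, P.map (g n) = stdGaussianPi (Fin (p n))) :
    ∀ᵐ ω ∂P, 0 < liminf (fun n =>
      sInf (obj2 (p n) ψ κ f (Λ n) (w n) (g n ω) '' {θ | l2 θ ≤ 1})) atTop := by
  have hpos (a b : ℝ) (hb : 0 ≤ b) : b < (√ψ)⁻¹ * Fk f κ a b := by
    rw [lt_inv_mul_iff₀ (sqrt_pos.2 hψ)]
    calc √ψ * b ≤ √(psiStar0 f) * b := mul_le_mul_of_nonneg_right (sqrt_le_sqrt hψf) hb
      _ ≤ Fk f 0 a b := sqrt_psiStar0_mul_le hf.measurable hf.mem_Icc a hb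
      _ < Fk f κ a b := hf.Fk_zero_lt_Fk hκ a b
  filter_upwards [h.ae_tendsto_norm_scaledNoise hp hg hlaw] with ω hω
  simp only [image_obj2 (h.l2_eq_one _)]
  exact liminf_sInf_marginObj_pos (hf.continuous_Fk hκ) hpos
    (fun n => (l2_eq_norm _).symm.trans (h.l2_eq_one n)) h.norm_sqrtCLM_le hω

end SpectralLimit

namespace IsAsympStationary

variable {p : ℕ → ℕ} {ψ κ c₁ c₂ s C : ℝ} {f : ℝ → ℝ} {Λ w g : (n : ℕ) → Fin (p n) → ℝ}
  {θ : (n : ℕ) → EuclideanSpace ℝ (Fin (p n))}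

lemma tendsto_sInf_obj2
    (hθ : IsAsympStationary (√ψ)⁻¹ c₁ c₂ (d1F f κ c₁ c₂) (d2F f κ c₁ c₂) s C
      (fun n => sqrtCLM (Λ n)) (fun n => WithLp.toLp 2 (w n)) (fun n => scaledNoise (g n)) θ)
    (hf : IsLink f) (hκ : 0 < κ) :
    Tendsto (fun n => sInf (obj2 (p n) ψ κ f (Λ n) (w n) (g n) '' {θ | l2 θ ≤ 1})) atTop
      (𝓝 (Tval f ψ κ c₁ c₂ s)) := by
  have hw (n : ℕ) : l2 (w n) = 1 := (l2_eq_norm _).trans (hθ.norm_eq_one n)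
  simp only [image_obj2 (hw _)]
  exact hθ.tendsto_sInf_marginObj (hf.continuous_Fk hκ) (hf.Fk_add_gradient_le hκ c₁ c₂)

lemma eventually_existsUnique_obj2
    (hθ : IsAsympStationary (√ψ)⁻¹ c₁ c₂ (d1F f κ c₁ c₂) (d2F f κ c₁ c₂) s C
      (fun n => sqrtCLM (Λ n)) (fun n => WithLp.toLp 2 (w n)) (fun n => scaledNoise (g n)) θ)
    (hf : IsLink f) (hκ : 0 < κ) :
    ∀ᶠ n in atTop, ∃! θ : Fin (p n) → ℝ, l2 θ ≤ 1 ∧ ∀ θ', l2 θ' ≤ 1 →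
      obj2 (p n) ψ κ f (Λ n) (w n) (g n) θ ≤ obj2 (p n) ψ κ f (Λ n) (w n) (g n) θ' := by
  have hw (n : ℕ) : l2 (w n) = 1 := (l2_eq_norm _).trans (hθ.norm_eq_one n)
  simp only [isMinOn_obj2_iff (hw _)]
  filter_upwards [hθ.eventually_existsUnique_isMinOn (hf.continuous_Fk hκ)
    (hf.Fk_add_gradient_le hκ c₁ c₂) (hf.hasDerivAt_Fk_smul hκ c₁ c₂) (hf.convexOn_Fk hκ)
    (hf.monotoneOn_Fk_snd hκ)] with n hn
  exact ((WithLp.equiv 2 (Fin (p n) → ℝ)).symm.bijective.existsUnique_iff).1 hn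

lemma tendsto_overlaps_of_isMinimizer
    (hθ : IsAsympStationary (√ψ)⁻¹ c₁ c₂ (d1F f κ c₁ c₂) (d2F f κ c₁ c₂) s C
      (fun n => sqrtCLM (Λ n)) (fun n => WithLp.toLp 2 (w n)) (fun n => scaledNoise (g n)) θ)
    (hf : IsLink f) (hκ : 0 < κ) {θh : (n : ℕ) → Fin (p n) → ℝ}
    (hθh : ∀ n, l2 (θh n) ≤ 1 ∧ ∀ θ', l2 θ' ≤ 1 →
      obj2 (p n) ψ κ f (Λ n) (w n) (g n) (θh n) ≤ obj2 (p n) ψ κ f (Λ n) (w n) (g n) θ') :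
    Tendsto (fun n => ∑ j, √(Λ n j) * w n j * θh n j) atTop (𝓝 c₁) ∧
      Tendsto (fun n => l2 fun j => √(Λ n j) * θh n j) atTop (𝓝 √(c₁ ^ 2 + c₂ ^ 2)) := by
  have hw (n : ℕ) : l2 (w n) = 1 := (l2_eq_norm _).trans (hθ.norm_eq_one n)
  simp only [isMinOn_obj2_iff (hw _), forall_and] at hθh
  have hzero := hθ.tendsto_norm_sub_of_isMinOn (hf.continuous_Fk hκ)
    (hf.Fk_add_gradient_le hκ c₁ c₂) hθh.1 hθh.2
  have hinner := hθ.tendsto_inner_of_tendsto_norm_sub hzero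
  have hnorm := hθ.tendsto_norm_of_tendsto_norm_sub hzero
  simp only [sqrtCLM, diagCLM_toLp, inner_toLp, mul_left_comm (w _ _), ← mul_assoc] at hinner
  simp only [sqrtCLM, diagCLM_toLp, ← l2_eq_norm] at hnorm
  exact ⟨hinner, hnorm⟩

end IsAsympStationary

theorem statement_12_general {ψ κ : ℝ} (hψ : 0 < ψ) (hκ : 0 < κ) {f : ℝ → ℝ} (hf : IsLink f)
    {p : ℕ → ℕ} (hp : Summable fun n => ((p n : ℝ) ^ 2)⁻¹) {xmin xmax : ℝ}
    {Λ w : (n : ℕ) → Fin (p n) → ℝ} {μ : Measure (ℝ × ℝ)} [IsProbabilityMeasure μ]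
    (h : SpectralLimit xmin xmax Λ w μ) {Ω : Type*} [MeasurableSpace Ω] {P : Measure Ω}
    [IsProbabilityMeasure P] {g : (n : ℕ) → Ω → Fin (p n) → ℝ} (hg : ∀ n, Measurable (g n))
    (hlaw : ∀ n, P.map (g n) = stdGaussianPi (Fin (p n))) :
    (ψ ≤ psiDown f μ κ → ∀ᵐ ω ∂P, 0 < liminf (fun n =>
      sInf (obj2 (p n) ψ κ f (Λ n) (w n) (g n ω) '' {θ | l2 θ ≤ 1})) atTop) ∧
    ∀ c₁ c₂ s : ℝ, 0 < c₂ → 0 < s → SolSysMu f μ ψ κ c₁ c₂ s → ∀ᵐ ω ∂P,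
      Tendsto (fun n => sInf (obj2 (p n) ψ κ f (Λ n) (w n) (g n ω) '' {θ | l2 θ ≤ 1})) atTop
        (𝓝 (Tval f ψ κ c₁ c₂ s)) ∧
      (∀ᶠ n in atTop, ∃! θ : Fin (p n) → ℝ, l2 θ ≤ 1 ∧ ∀ θ', l2 θ' ≤ 1 →
        obj2 (p n) ψ κ f (Λ n) (w n) (g n ω) θ ≤ obj2 (p n) ψ κ f (Λ n) (w n) (g n ω) θ') ∧
      ∀ θh : (n : ℕ) → Fin (p n) → ℝ,
        (∀ n, l2 (θh n) ≤ 1 ∧ ∀ θ', l2 θ' ≤ 1 → obj2 (p n) ψ κ f (Λ n) (w n) (g n ω) (θh n) ≤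
          obj2 (p n) ψ κ f (Λ n) (w n) (g n ω) θ') →
        Tendsto (fun n => ∑ j, √(Λ n j) * w n j * θh n j) atTop (𝓝 c₁) ∧
          Tendsto (fun n => l2 fun j => √(Λ n j) * θh n j) atTop (𝓝 √(c₁ ^ 2 + c₂ ^ 2)) := by
  refine ⟨fun hψf => ?_, fun c₁ c₂ s hc₂ hs hsys => ?_⟩
  · exact h.ae_liminf_sInf_obj2_pos hf hκ hψ (hψf.trans_eq (psiDown_eq_psiStar0 f μ κ)) hp hg hlaw
  · filter_upwards [h.ae_isAsympStationary hp hg hlaw hψ hc₂ hs (hf.d2F_nonneg hκ c₁ hc₂.le) hsys]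
      with ω hω
    exact ⟨hω.tendsto_sInf_obj2 hf hκ, hω.eventually_existsUnique_obj2 hf hκ,
      fun _ => hω.tendsto_overlaps_of_isMinimizer hf hκ⟩

/-- Almost sure asymptotics of `ξ⁽²⁾_{n,ψ,κ}` and of its minimizer. -/
theorem statement_12 (ψ : ℝ) (hψ : 0 < ψ) (κ : ℝ) (hκ : 0 < κ)
    (f : ℝ → ℝ) (hf : Continuous f) (hf01 : ∀ x, f x ∈ Set.Icc (0:ℝ) 1)
    (ρ : ℝ) (hρ : 0 < ρ) (hnd : NonDeg (fun x => f (ρ * x)))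
    (p : ℕ → ℕ) (hp : Tendsto (fun n => (p n : ℝ) / (n : ℝ)) atTop (nhds ψ))
    (xmin xmax : ℝ) (hxmin : 0 < xmin) (hxx : xmin ≤ xmax)
    (Λ : (n : ℕ) → Fin (p n) → ℝ) (hΛ : ∀ n j, Λ n j ∈ Set.Icc xmin xmax)
    (w : (n : ℕ) → Fin (p n) → ℝ) (hwunit : ∀ n, l2 (w n) = 1)
    (μ : Measure (ℝ × ℝ)) [IsProbabilityMeasure μ]
    (hμsupp : ∀ᵐ q ∂μ, q.1 ∈ Set.Icc xmin xmax)
    (hμw2 : ∫ q, q.2 ^ 2 ∂μ = 1)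
    -- W₂ convergence of the empirical measures: weak convergence plus convergence of
    -- second moments
    (hweak : ∀ φ : BoundedContinuousFunction (ℝ × ℝ) ℝ,
      Tendsto (fun n => ∫ q, φ q
          ∂(empMeas (p n) (fun i => (Λ n i, Real.sqrt (p n : ℝ) * w n i))))
        atTop (nhds (∫ q, φ q ∂μ)))
    (hsecond : Tendsto (fun n => ∫ q, q.1 ^ 2 + q.2 ^ 2
          ∂(empMeas (p n) (fun i => (Λ n i, Real.sqrt (p n : ℝ) * w n i))))
        atTop (nhds (∫ q, q.1 ^ 2 + q.2 ^ 2 ∂μ)))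
    -- the Gaussian vectors, on a common probability space
    (Ω : Type*) [MeasureSpace Ω] [IsProbabilityMeasure (ℙ : Measure Ω)]
    (g : (n : ℕ) → Ω → Fin (p n) → ℝ)
    (hgmeas : ∀ n, Measurable (g n))
    (hglaw : ∀ n, Measure.map (g n) ℙ = stdGaussianPi (Fin (p n))) :
    -- (a)
    ((ψ ≤ psiDown (fun x => f (ρ * x)) μ κ) →
      ∀ᵐ ω ∂(ℙ : Measure Ω),
        0 < Filter.liminf (fun n =>
          sInf ((obj2 (p n) ψ κ (fun x => f (ρ * x)) (Λ n) (w n) (g n ω)) ''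
            {θ : Fin (p n) → ℝ | l2 θ ≤ 1})) atTop)
    -- (b)
    ∧ (psiDown (fun x => f (ρ * x)) μ κ < ψ →
      ∀ c₁ c₂ s : ℝ, 0 < c₂ → 0 < s → SolSysMu (fun x => f (ρ * x)) μ ψ κ c₁ c₂ s →
      ∀ᵐ ω ∂(ℙ : Measure Ω),
        Tendsto (fun n =>
            sInf ((obj2 (p n) ψ κ (fun x => f (ρ * x)) (Λ n) (w n) (g n ω)) ''
              {θ : Fin (p n) → ℝ | l2 θ ≤ 1})) atTop
          (nhds (Tval (fun x => f (ρ * x)) ψ κ c₁ c₂ s))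
        ∧ (∀ᶠ n in atTop, ∃! θ : Fin (p n) → ℝ,
            l2 θ ≤ 1 ∧ ∀ θ' : Fin (p n) → ℝ, l2 θ' ≤ 1 →
              obj2 (p n) ψ κ (fun x => f (ρ * x)) (Λ n) (w n) (g n ω) θ
                ≤ obj2 (p n) ψ κ (fun x => f (ρ * x)) (Λ n) (w n) (g n ω) θ')
        ∧ (∀ θh : (n : ℕ) → Fin (p n) → ℝ,
            (∀ n, l2 (θh n) ≤ 1 ∧ ∀ θ' : Fin (p n) → ℝ, l2 θ' ≤ 1 →
              obj2 (p n) ψ κ (fun x => f (ρ * x)) (Λ n) (w n) (g n ω) (θh n)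
                ≤ obj2 (p n) ψ κ (fun x => f (ρ * x)) (Λ n) (w n) (g n ω) θ') →
            Tendsto (fun n => ∑ j, Real.sqrt (Λ n j) * w n j * θh n j) atTop (nhds c₁)
              ∧ Tendsto (fun n => l2 (fun j => Real.sqrt (Λ n j) * θh n j)) atTop
                  (nhds (Real.sqrt (c₁ ^ 2 + c₂ ^ 2))))) := by
  have hsum (n : ℕ) : ∑ i, w n i ^ 2 = 1 := sqrt_eq_one.1 (hwunit n)
  have hlink : IsLink fun x => f (ρ * x) :=
    ⟨(hf.comp (continuous_const_mul ρ)).measurable, fun _ => hf01 _, hnd⟩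
  exact (statement_12_general hψ hκ hlink (summable_inv_sq_of_tendsto_div hψ hp)
    ⟨hxmin, hΛ, hsum, hμsupp, hμw2, hweak⟩ hgmeas hglaw).imp_right fun hb _ => hb

end MaxMargin
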